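/- arXiv:2108.00234 — 2 statements merged into one kernel-verified Lean document; each statement's English description precedes it below -/
import Mathlib

section
/- The function γ belongs to C^{1,2}((0,T) × ℝ): at every (t,r) ∈ (0,T) × ℝ, γ is continuously differentiable with respect to t and twice continuously differentiable with respect to r. -/
open Real Filter MeasureTheory intervalIntegral

noncomputable def M (a δ b u r : ℝ) : ℝ :=
  Real.exp (-(b - δ^2/(2*a^2))*u + ((b - δ^2/(2*a^2)) - r)/a * (1 - Real.exp (-(a*u)))
    - δ^2/(4*a^3) * (1 - Real.exp (-(a*u)))^2)

/-- The separating curve `α(t)`. -/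
noncomputable def alphaCurve (a δ b T t : ℝ) : ℝ :=
  (b - δ^2/(2*a^2)) * (1 - a*(T - t)/(1 - Real.exp (-(a*(T - t)))))
    - δ^2/(4*a^2) * (1 - Real.exp (-(a*(T - t))))

/-- The Gaussian kernel `φ(z,u,r)`. -/
noncomputable def phiKer (a δ b z u r : ℝ) : ℝ :=
  (Real.sqrt (2*Real.pi*(δ^2/(2*a))*(1 - Real.exp (-(2*a*u)))))⁻¹ *
    Real.exp (-(z - r*Real.exp (-(a*u)) - b*(1 - Real.exp (-(a*u)))
      + δ^2/(2*a^2)*(1 - Real.exp (-(a*u)))^2)^2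
      / (2*(δ^2/(2*a))*(1 - Real.exp (-(2*a*u)))))

/-- The function `γ(t,r) = ∫_0^{T−t} ∫_{α(u+t)}^∞ M(u,r)(1−M(T−u−t,z))φ(z,u,r) dz du`. -/
noncomputable def gammaFun (a δ b T t r : ℝ) : ℝ :=
  ∫ u in (0:ℝ)..(T - t), ∫ z in Set.Ioi (alphaCurve a δ b T (u + t)),
    M a δ b u r * (1 - M a δ b (T - u - t) z) * phiKer a δ b z u r

/-! As `M a δ b s · < 1` exactly above the critical rate, the inner integral is the expectation of
the positive part of `M u r * (1 - M s z)`, `s = T - t - u`, for a Gaussian `z`, that is, of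
`z = m u + σ u * x` with `x` standard normal. The time `t` now occurs only in `s`, and this
expression vanishes at `s = 0`, so the domain of integration can be enlarged to one not depending
on `t`. The kinks of the positive part are met with probability zero, and dominated differentiation
gives `C¹` in `t`.

For the regularity in `r`, the expectation over `x` has a closed form with two normal tails. In its
first derivative the two normal densities cancel. In the second they do not, but they carry a single
factor `exp (-(a * u)) / σ u`, of order `1 / √u`, which is integrable. -/

open Set Function ProbabilityTheory
open scoped Topology

section ParametricIntegral

variable {Ω E : Type*} [MeasurableSpace Ω] {μ : Measure Ω} [NormedAddCommGroup E]
  [NormedSpace ℝ E] {f : ℝ → Ω → E} {bound : Ω → ℝ} {s : Set ℝ} {x : ℝ}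

lemma aestronglyMeasurable_deriv_param (hf : ∀ y, AEStronglyMeasurable (f y) μ)
    (hd : ∀ᵐ ω ∂μ, DifferentiableAt ℝ (f · ω) x) :
    AEStronglyMeasurable (fun ω => deriv (f · ω) x) μ := by
  refine aestronglyMeasurable_of_tendsto_ae (𝓝[≠] x) (f := fun y ω => slope (f · ω) x y)
    (fun y => ((hf y).sub (hf x)).const_smul (y - x)⁻¹) ?_
  filter_upwards [hd] with ω hω
  exact hasDerivAt_iff_tendsto_slope.1 hω.hasDerivAt

variable (hs : IsOpen s) (hf : ∀ y, AEStronglyMeasurable (f y) μ)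
  (hlip : ∀ᵐ ω ∂μ, LipschitzOnWith (Real.nnabs (bound ω)) (f · ω) s) (hb : Integrable bound μ)

include hs hf hlip hb

lemma hasDerivAt_integral_of_lipschitzOn (hx : x ∈ s) (hfi : Integrable (f x) μ)
    (hd : ∀ᵐ ω ∂μ, DifferentiableAt ℝ (f · ω) x) :
    HasDerivAt (fun y => ∫ ω, f y ω ∂μ) (∫ ω, deriv (f · ω) x ∂μ) x :=
  (hasDerivAt_integral_of_dominated_loc_of_lip (hs.mem_nhds hx) (.of_forall hf) hfi
    (aestronglyMeasurable_deriv_param hf hd) hlip hb (hd.mono fun _ h => h.hasDerivAt)).2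

lemma contDiffOn_integral_of_lipschitzOn (hfi : ∀ x ∈ s, Integrable (f x) μ)
    (hd : ∀ x ∈ s, ∀ᵐ ω ∂μ, ContDiffAt ℝ 1 (f · ω) x) :
    ContDiffOn ℝ 1 (fun y => ∫ ω, f y ω ∂μ) s := by
  have hdiff : ∀ x ∈ s, ∀ᵐ ω ∂μ, DifferentiableAt ℝ (f · ω) x := fun x hx =>
    (hd x hx).mono fun _ h => h.differentiableAt one_ne_zero
  have hderiv : ∀ x ∈ s, HasDerivAt (fun y => ∫ ω, f y ω ∂μ) (∫ ω, deriv (f · ω) x ∂μ) x :=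
    fun x hx => hasDerivAt_integral_of_lipschitzOn hs hf hlip hb hx (hfi x hx) (hdiff x hx)
  have hcont : ContinuousOn (fun y => ∫ ω, deriv (f · ω) y ∂μ) s := by
    refine continuousOn_of_forall_continuousAt fun x hx => ?_
    have hmem : ∀ᶠ y in 𝓝 x, y ∈ s := hs.mem_nhds hx
    refine continuousAt_of_dominated (bound := fun ω => |bound ω|)
      (hmem.mono fun y hy => aestronglyMeasurable_deriv_param hf (hdiff y hy))
      (hmem.mono fun y hy => ?_) hb.abs ?_
    · filter_upwards [hlip] with ω hω
      exact norm_deriv_le_of_lipschitzOn (hs.mem_nhds hy) hω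
    · filter_upwards [hd x hx] with ω hω
      simpa only [fderiv_apply_one_eq_deriv] using
        (hω.continuousAt_fderiv one_ne_zero).clm_apply (continuousAt_const (y := (1 : ℝ)))
  rw [← zero_add (1 : WithTop ℕ∞), contDiffOn_succ_iff_deriv_of_isOpen hs]
  exact ⟨fun x hx => (hderiv x hx).differentiableAt.differentiableWithinAt, by simp,
    contDiffOn_zero.2 (hcont.congr fun x hx => (hderiv x hx).deriv)⟩

end ParametricIntegral

lemma ae_prod_restrict_fst_mem {α β : Type*} [MeasurableSpace α] [MeasurableSpace β]
    {μ : Measure α} {ν : Measure β} [SFinite ν] {s : Set α} (hs : MeasurableSet s) :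
    ∀ᵐ p ∂(μ.restrict s).prod ν, p.1 ∈ s :=
  Measure.quasiMeasurePreserving_fst.ae (ae_restrict_mem hs)

lemma contDiffAt_max_zero {x : ℝ} {n : WithTop ℕ∞} (hx : x ≠ 0) :
    ContDiffAt ℝ n (fun y : ℝ => max 0 y) x := by
  rcases lt_or_gt_of_ne hx with h | h
  · exact contDiffAt_const.congr_of_eventuallyEq
      ((eventually_lt_nhds h).mono fun y hy => max_eq_left hy.le)
  · exact contDiffAt_id.congr_of_eventuallyEq
      ((eventually_gt_nhds h).mono fun y hy => max_eq_right hy.le)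

lemma contDiffAt_max_zero_comp_max_zero {q : ℝ → ℝ} {s : ℝ} (hq : ContDiff ℝ 1 q) (hs : s ≠ 0)
    (hqs : q s ≠ 0) : ContDiffAt ℝ 1 (fun y => max 0 (q (max 0 y))) s := by
  rcases lt_or_gt_of_ne hs with h | h
  · exact (contDiffAt_const (c := max 0 (q 0))).congr_of_eventuallyEq
      ((eventually_lt_nhds h).mono fun y hy => by simp only [max_eq_left hy.le])
  · refine ((contDiffAt_max_zero hqs).comp s hq.contDiffAt).congr_of_eventuallyEq
      ((eventually_gt_nhds h).mono fun y hy => by simp only [comp_apply, max_eq_right hy.le])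

lemma lipschitzOnWith_max_zero_comp_max_zero {q : ℝ → ℝ} {S : ℝ} {K : NNReal} (hS : 0 ≤ S)
    (hq : LipschitzOnWith K q (Icc 0 S)) :
    LipschitzOnWith K (fun y => max 0 (q (max 0 y))) (Iic S) := by
  have hmax : LipschitzWith 1 fun y : ℝ => max 0 y := LipschitzWith.id.const_max 0
  have h := hmax.lipschitzOnWith (s := univ) |>.comp
    (hq.comp (hmax.lipschitzOnWith (s := Iic S)) fun y hy => ⟨le_max_left _ _, max_le hS hy⟩)
    (mapsTo_univ _ _)
  rwa [one_mul, mul_one] at h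

section PositivePart

variable {Ω : Type*} [MeasurableSpace Ω] {μ : Measure Ω} {q : ℝ → Ω → ℝ} {X L : Ω → ℝ} {S : ℝ}
  (hS : 0 ≤ S) (hqm : Measurable (uncurry q)) (hX : Measurable X) (hX0 : ∀ᵐ ω ∂μ, 0 ≤ X ω)
  (hq0 : ∀ ω, q 0 ω = 0) (hL : Integrable L μ)
  (hlip : ∀ᵐ ω ∂μ, LipschitzOnWith (Real.nnabs (L ω)) (q · ω) (Icc 0 S))

include hS hqm hX hX0 hq0 hL hlip

lemma integrable_max_zero_comp_max_zero {τ : ℝ} (hτ : τ ≤ S) :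
    Integrable (fun ω => max 0 (q (max 0 (τ - X ω)) ω)) μ := by
  refine (hL.abs.mul_const S).mono' (measurable_const.max (hqm.comp ((measurable_const.max
    (measurable_const.sub hX)).prodMk measurable_id))).aestronglyMeasurable ?_
  filter_upwards [hX0, hlip] with ω hω hl
  have hmem : max 0 (τ - X ω) ∈ Icc 0 S := ⟨le_max_left _ _, max_le hS (by linarith)⟩
  have hle : |q (max 0 (τ - X ω)) ω| ≤ |L ω| * |max 0 (τ - X ω)| := by
    simpa only [hq0, sub_zero, Real.norm_eq_abs, Real.coe_nnabs] using
      hl.norm_sub_le hmem ⟨le_rfl, hS⟩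
  calc ‖max 0 (q (max 0 (τ - X ω)) ω)‖ ≤ |q (max 0 (τ - X ω)) ω| := by
        rw [Real.norm_of_nonneg (le_max_left _ _)]
        exact max_le (abs_nonneg _) (le_abs_self _)
    _ ≤ |L ω| * |max 0 (τ - X ω)| := hle
    _ ≤ |L ω| * S := by
        rw [abs_of_nonneg hmem.1]
        exact mul_le_mul_of_nonneg_left hmem.2 (abs_nonneg _)

-- The integrand is not differentiable in `τ` at the kinks of the positive parts, but for each `τ`
-- these are met only by a null set of `ω`.
lemma contDiffOn_integral_max_zero (hq : ∀ ω, ContDiff ℝ 1 (q · ω))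
    (hne : ∀ τ < S, ∀ᵐ ω ∂μ, X ω ≠ τ ∧ q (τ - X ω) ω ≠ 0) :
    ContDiffOn ℝ 1 (fun τ => ∫ ω, max 0 (q (max 0 (τ - X ω)) ω) ∂μ) (Iio S) := by
  have hlip' : ∀ᵐ ω ∂μ, LipschitzOnWith (Real.nnabs (L ω))
      (fun τ => max 0 (q (max 0 (τ - X ω)) ω)) (Iio S) := by
    filter_upwards [hX0, hlip] with ω hω hl
    have h := (lipschitzOnWith_max_zero_comp_max_zero hS hl).comp
      ((LipschitzWith.id.sub (LipschitzWith.const (X ω))).lipschitzOnWith (s := Iio S))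
      fun τ hτ => by simp only [id, mem_Iic]; linarith [mem_Iio.1 hτ]
    rwa [add_zero, mul_one] at h
  refine contDiffOn_integral_of_lipschitzOn isOpen_Iio
    (fun τ => (measurable_const.max (hqm.comp ((measurable_const.max
      (measurable_const.sub hX)).prodMk measurable_id))).aestronglyMeasurable) hlip' hL
    (fun τ hτ => integrable_max_zero_comp_max_zero hS hqm hX hX0 hq0 hL hlip hτ.le)
    fun τ hτ => ?_
  filter_upwards [hne τ hτ] with ω hω
  exact (contDiffAt_max_zero_comp_max_zero (hq ω) (sub_ne_zero.2 hω.1.symm) hω.2).comp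
    (f := fun τ => τ - X ω) τ (contDiffAt_id.sub contDiffAt_const)

end PositivePart

section StandardNormal

/-- The survival function of the standard normal distribution. -/
noncomputable def normalTail (x : ℝ) : ℝ := (gaussianReal 0 1).real (Ioi x)

/-- The expected payoff `∫ max 0 (1 - exp (θ * (y - x)))` over a standard normal `x`, in closed
form for `0 ≤ θ`. -/
noncomputable def normalPut (θ y : ℝ) : ℝ :=
  normalTail y - exp (θ * y + θ ^ 2 / 2) * normalTail (y + θ)

lemma normalTail_eq_setIntegral (x : ℝ) :
    normalTail x = ∫ z in Ioi x, gaussianPDFReal 0 1 z := by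
  rw [normalTail, measureReal_def, gaussianReal_apply_eq_integral 0 one_ne_zero,
    ENNReal.toReal_ofReal (integral_nonneg fun z => gaussianPDFReal_nonneg 0 1 z)]

lemma continuous_gaussianPDFReal_zero_one : Continuous (gaussianPDFReal 0 1) := by
  unfold gaussianPDFReal
  fun_prop

lemma hasDerivAt_normalTail (x : ℝ) : HasDerivAt normalTail (-gaussianPDFReal 0 1 x) x := by
  have hi := integrable_gaussianPDFReal 0 1
  have h : normalTail = fun y => (∫ z in Ioi 0, gaussianPDFReal 0 1 z)
      - ∫ z in (0 : ℝ)..y, gaussianPDFReal 0 1 z := by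
    funext y
    rw [← integral_Ioi_sub_Ioi' hi.integrableOn hi.integrableOn, normalTail_eq_setIntegral,
      sub_sub_cancel]
  rw [h]
  exact (continuous_gaussianPDFReal_zero_one.integral_hasStrictDerivAt 0 x).hasDerivAt.const_sub _

lemma deriv_normalTail (x : ℝ) : deriv normalTail x = -gaussianPDFReal 0 1 x :=
  (hasDerivAt_normalTail x).deriv

lemma contDiff_normalTail : ContDiff ℝ 1 normalTail := by
  rw [contDiff_one_iff_deriv, funext deriv_normalTail]
  exact ⟨fun x => (hasDerivAt_normalTail x).differentiableAt,
    continuous_gaussianPDFReal_zero_one.neg⟩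

lemma abs_normalTail_le_one (x : ℝ) : |normalTail x| ≤ 1 := by
  rw [normalTail, abs_of_nonneg measureReal_nonneg]
  exact measureReal_le_one

lemma abs_deriv_normalTail_le_one (x : ℝ) : |deriv normalTail x| ≤ 1 := by
  rw [deriv_normalTail, abs_neg, abs_of_nonneg (gaussianPDFReal_nonneg 0 1 x), gaussianPDFReal]
  refine mul_le_one₀ (inv_le_one_of_one_le₀ (one_le_sqrt.2 ?_)) (exp_nonneg _)
    (exp_le_one_iff.2 ?_)
  · rw [NNReal.coe_one, mul_one]
    linarith [pi_gt_three]
  · rw [neg_div]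
    exact neg_nonpos.2 (by positivity)

lemma gaussianPDFReal_eq_exp_mul (θ x : ℝ) :
    gaussianPDFReal 0 1 x = exp (θ * x + θ ^ 2 / 2) * gaussianPDFReal 0 1 (x + θ) := by
  rw [gaussianPDFReal, gaussianPDFReal, mul_left_comm, ← exp_add]
  congr 2
  rw [NNReal.coe_one]
  ring

lemma setIntegral_exp_mul_sub_gaussianReal (θ y : ℝ) :
    ∫ x in Ioi y, exp (θ * (y - x)) ∂gaussianReal 0 1
      = exp (θ * y + θ ^ 2 / 2) * normalTail (y + θ) := by
  rw [← MeasureTheory.integral_indicator measurableSet_Ioi,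
    integral_gaussianReal_eq_integral_smul one_ne_zero, normalTail_eq_setIntegral,
    ← MeasureTheory.integral_indicator measurableSet_Ioi,
    ← integral_add_right_eq_self ((Ioi (y + θ)).indicator (gaussianPDFReal 0 1)) θ,
    ← MeasureTheory.integral_const_mul]
  congr 1
  funext x
  simp only [indicator, mem_Ioi, add_lt_add_iff_right, smul_eq_mul]
  split_ifs
  · rw [gaussianPDFReal_eq_exp_mul θ x, mul_right_comm, ← exp_add]
    ring_nf
  · rw [mul_zero, mul_zero]

lemma max_zero_one_sub_exp_eq_indicator {θ : ℝ} (hθ : 0 ≤ θ) (y : ℝ) :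
    (fun x => max 0 (1 - exp (θ * (y - x))))
      = (Ioi y).indicator fun x => 1 - exp (θ * (y - x)) := by
  funext x
  by_cases hx : y < x
  · rw [indicator_of_mem (mem_Ioi.2 hx)]
    refine max_eq_right (sub_nonneg.2 (exp_le_one_iff.2 ?_))
    exact mul_nonpos_of_nonneg_of_nonpos hθ (sub_nonpos.2 hx.le)
  · rw [indicator_of_notMem (notMem_Ioi.2 (not_lt.1 hx))]
    refine max_eq_left (sub_nonpos.2 (one_le_exp ?_))
    exact mul_nonneg hθ (sub_nonneg.2 (not_lt.1 hx))

lemma integrable_exp_mul_sub_gaussianReal (θ y : ℝ) :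
    Integrable (fun x => exp (θ * (y - x))) (gaussianReal 0 1) := by
  refine ((integrable_exp_mul_gaussianReal (-θ)).const_mul (exp (θ * y))).congr (.of_forall ?_)
  intro x
  simp only [← exp_add]
  ring_nf

lemma integral_max_zero_one_sub_exp {θ : ℝ} (hθ : 0 ≤ θ) (y : ℝ) :
    ∫ x, max 0 (1 - exp (θ * (y - x))) ∂gaussianReal 0 1 = normalPut θ y := by
  rw [max_zero_one_sub_exp_eq_indicator hθ, MeasureTheory.integral_indicator measurableSet_Ioi,
    MeasureTheory.integral_sub (integrable_const 1)
      (integrable_exp_mul_sub_gaussianReal θ y).integrableOn,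
    setIntegral_exp_mul_sub_gaussianReal, setIntegral_const, smul_eq_mul, mul_one]
  rfl

end StandardNormal

section AffineParameter

lemma hasDerivAt_mul_comp_sub_mul {g Ψ : ℝ → ℝ} {g' y ε r : ℝ} (hg : HasDerivAt g g' r)
    (hΨ : DifferentiableAt ℝ Ψ (y - ε * r)) :
    HasDerivAt (fun r => g r * Ψ (y - ε * r))
      (g' * Ψ (y - ε * r) - g r * (deriv Ψ (y - ε * r) * ε)) r := by
  have hin : HasDerivAt (fun r => y - ε * r) (-ε) r := by
    simpa only [id, mul_one] using ((hasDerivAt_id r).const_mul ε).const_sub y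
  convert! hg.mul (hΨ.hasDerivAt.comp r hin) using 1
  rw [comp_apply]
  ring

lemma hasDerivAt_exp_sub_mul (k β r : ℝ) :
    HasDerivAt (fun r => exp (k - β * r)) (-β * exp (k - β * r)) r := by
  simpa only [id, mul_one, mul_comm] using
    (((hasDerivAt_id r).const_mul β).const_sub k).exp

variable {U : Type*} [TopologicalSpace U] {k : Set U}

lemma exists_abs_le_of_continuous_uncurry {g : U → ℝ → ℝ} (hk : IsCompact k)
    (hg : Continuous (uncurry g)) (r₀ : ℝ) :
    ∃ C, ∀ u ∈ k, ∀ r ∈ Metric.ball r₀ 1, |g u r| ≤ C := by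
  obtain ⟨C, hC⟩ := (hk.prod (isCompact_closedBall r₀ 1)).exists_bound_of_continuousOn
    hg.continuousOn
  exact ⟨C, fun u hu r hr => hC (u, r) ⟨hu, Metric.ball_subset_closedBall hr⟩⟩

variable [MeasurableSpace U] [OpensMeasurableSpace U] {μ : Measure U} [IsFiniteMeasure μ]
  {Ψ : ℝ → ℝ} {K : ℝ}

lemma integrable_mul_comp_of_abs_le {g y : U → ℝ} (hk : IsCompact k) (hμk : ∀ᵐ u ∂μ, u ∈ k)
    (hg : Continuous g) (hΨ : Continuous Ψ) (hΨK : ∀ x, |Ψ x| ≤ K)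
    (hy : AEStronglyMeasurable y μ) : Integrable (fun u => g u * Ψ (y u)) μ := by
  obtain ⟨C, hC⟩ := hk.exists_bound_of_continuousOn hg.continuousOn
  have hgi : Integrable g μ := .of_bound hg.aestronglyMeasurable C (hμk.mono hC)
  exact hgi.mul_bdd (c := K) (hΨ.comp_aestronglyMeasurable hy) (.of_forall fun u => hΨK (y u))

variable (hk : IsCompact k) (hμk : ∀ᵐ u ∂μ, u ∈ k) (hΨ : ContDiff ℝ 1 Ψ)
  (hΨK : ∀ x, |Ψ x| ≤ K)

include hk hμk hΨ hΨK

lemma contDiff_integral_mul_comp_sub_mul {g g' : U → ℝ → ℝ} {y ε : U → ℝ}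
    (hg : Continuous (uncurry g)) (hg' : Continuous (uncurry g'))
    (hgg' : ∀ u r, HasDerivAt (g u) (g' u r) r) (hΨK' : ∀ x, |deriv Ψ x| ≤ K)
    (hy : AEStronglyMeasurable y μ) (hε : Integrable ε μ) :
    ContDiff ℝ 1 fun r => ∫ u, g u r * Ψ (y u - ε u * r) ∂μ := by
  have hym : ∀ r, AEStronglyMeasurable (fun u => y u - ε u * r) μ := fun r =>
    hy.sub (hε.1.mul_const r)
  have hintgr : ∀ r, Integrable (fun u => g u r * Ψ (y u - ε u * r)) μ := fun r =>
    integrable_mul_comp_of_abs_le hk hμk (hg.comp (.prodMk_left r)) hΨ.continuous hΨK (hym r)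
  have hC1 : ∀ u r, ContDiffAt ℝ 1 (fun r => g u r * Ψ (y u - ε u * r)) r := by
    intro u r
    refine .mul (ContDiff.contDiffAt ?_) (hΨ.comp (by fun_prop)).contDiffAt
    rw [contDiff_one_iff_deriv, funext fun r => (hgg' u r).deriv]
    exact ⟨fun r => (hgg' u r).differentiableAt, hg'.comp (.prodMk_right u)⟩
  refine contDiff_iff_contDiffAt.2 fun r₀ => ?_
  obtain ⟨C, hC⟩ := exists_abs_le_of_continuous_uncurry hk hg r₀
  obtain ⟨C', hC'⟩ := exists_abs_le_of_continuous_uncurry hk hg' r₀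
  refine (contDiffOn_integral_of_lipschitzOn Metric.isOpen_ball (fun r => (hintgr r).1)
    (bound := fun u => C' * K + C * (K * |ε u|)) ?_ (by fun_prop) (fun r _ => hintgr r)
    fun r _ => .of_forall fun u => hC1 u r).contDiffAt (Metric.ball_mem_nhds r₀ one_pos)
  filter_upwards [hμk] with u hu
  refine (convex_ball r₀ 1).lipschitzOnWith_of_nnnorm_hasDerivWithin_le
    (fun r _ => (hasDerivAt_mul_comp_sub_mul (hgg' u r)
      (hΨ.differentiable one_ne_zero _)).hasDerivWithinAt) fun r hr => ?_
  rw [← NNReal.coe_le_coe, coe_nnnorm, Real.coe_nnabs]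
  refine (abs_sub _ _).trans (le_trans ?_ (le_abs_self _))
  rw [abs_mul, abs_mul, abs_mul]
  gcongr
  exacts [(abs_nonneg _).trans (hC' u hu r hr), hC' u hu r hr, hΨK _,
    (abs_nonneg _).trans (hC u hu r hr), hC u hu r hr, hΨK' _]

-- The matching condition removes from the integrand the terms carrying a factor `ε`. As `ε` need
-- not be square integrable, the second derivative exists only thanks to this cancellation.
lemma hasDerivAt_integral_mul_comp_sub {g₀ g₀' g₁ g₁' : U → ℝ → ℝ} {y₀ y₁ ε : U → ℝ}
    (hg₀ : Continuous (uncurry g₀)) (hg₀' : Continuous (uncurry g₀'))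
    (hgg₀' : ∀ u r, HasDerivAt (g₀ u) (g₀' u r) r)
    (hg₁ : Continuous (uncurry g₁)) (hg₁' : Continuous (uncurry g₁'))
    (hgg₁' : ∀ u r, HasDerivAt (g₁ u) (g₁' u r) r)
    (hy₀ : ∀ r, AEStronglyMeasurable (fun u => y₀ u - ε u * r) μ)
    (hy₁ : ∀ r, AEStronglyMeasurable (fun u => y₁ u - ε u * r) μ)
    (hmatch : ∀ᵐ u ∂μ, ∀ r,
      g₀ u r * deriv Ψ (y₀ u - ε u * r) = g₁ u r * deriv Ψ (y₁ u - ε u * r)) (r₀ : ℝ) :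
    HasDerivAt (fun r => ∫ u, (g₀ u r * Ψ (y₀ u - ε u * r) - g₁ u r * Ψ (y₁ u - ε u * r)) ∂μ)
      (∫ u, (g₀' u r₀ * Ψ (y₀ u - ε u * r₀) - g₁' u r₀ * Ψ (y₁ u - ε u * r₀)) ∂μ) r₀ := by
  have hintgr : ∀ {h₀ h₁ : U → ℝ → ℝ}, Continuous (uncurry h₀) → Continuous (uncurry h₁) → ∀ r,
      Integrable (fun u => h₀ u r * Ψ (y₀ u - ε u * r) - h₁ u r * Ψ (y₁ u - ε u * r)) μ :=
    fun h₀ h₁ r =>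
      (integrable_mul_comp_of_abs_le hk hμk (h₀.comp (.prodMk_left r)) hΨ.continuous hΨK
        (hy₀ r)).sub (integrable_mul_comp_of_abs_le hk hμk (h₁.comp (.prodMk_left r))
        hΨ.continuous hΨK (hy₁ r))
  obtain ⟨C₀, hC₀⟩ := exists_abs_le_of_continuous_uncurry hk hg₀' r₀
  obtain ⟨C₁, hC₁⟩ := exists_abs_le_of_continuous_uncurry hk hg₁' r₀
  refine (hasDerivAt_integral_of_dominated_loc_of_deriv_le
    (F' := fun r u => g₀' u r * Ψ (y₀ u - ε u * r) - g₁' u r * Ψ (y₁ u - ε u * r))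
    (bound := fun _ => C₀ * K + C₁ * K) (Metric.ball_mem_nhds r₀ one_pos)
    (.of_forall fun r => (hintgr hg₀ hg₁ r).1) (hintgr hg₀ hg₁ r₀) (hintgr hg₀' hg₁' r₀).1
    ?_ (integrable_const _) ?_).2
  · filter_upwards [hμk] with u hu r hr
    refine (abs_sub _ _).trans ?_
    rw [abs_mul, abs_mul]
    gcongr
    exacts [(abs_nonneg _).trans (hC₀ u hu r hr), hC₀ u hu r hr, hΨK _,
      (abs_nonneg _).trans (hC₁ u hu r hr), hC₁ u hu r hr, hΨK _]
  · filter_upwards [hmatch] with u hu r _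
    have hΨd : Differentiable ℝ Ψ := hΨ.differentiable one_ne_zero
    convert! (hasDerivAt_mul_comp_sub_mul (hgg₀' u r) (hΨd _)).sub
      (hasDerivAt_mul_comp_sub_mul (hgg₁' u r) (hΨd _)) using 1
    linear_combination ε u * hu r

lemma contDiff_two_integral_exp_mul_comp_sub {κ₀ β₀ κ₁ β₁ y₀ y₁ ε : U → ℝ}
    (hκ₀ : Continuous κ₀) (hβ₀ : Continuous β₀) (hκ₁ : Continuous κ₁) (hβ₁ : Continuous β₁)
    (hΨK' : ∀ x, |deriv Ψ x| ≤ K) (hy₀ : AEStronglyMeasurable y₀ μ)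
    (hy₁ : AEStronglyMeasurable y₁ μ) (hε : Integrable ε μ)
    (hmatch : ∀ᵐ u ∂μ, ∀ r, exp (κ₀ u - β₀ u * r) * deriv Ψ (y₀ u - ε u * r)
      = exp (κ₁ u - β₁ u * r) * deriv Ψ (y₁ u - ε u * r)) :
    ContDiff ℝ 2 fun r => ∫ u, (exp (κ₀ u - β₀ u * r) * Ψ (y₀ u - ε u * r)
      - exp (κ₁ u - β₁ u * r) * Ψ (y₁ u - ε u * r)) ∂μ := by
  have hym₀ : ∀ r, AEStronglyMeasurable (fun u => y₀ u - ε u * r) μ :=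
    fun r => hy₀.sub (hε.1.mul_const r)
  have hym₁ : ∀ r, AEStronglyMeasurable (fun u => y₁ u - ε u * r) μ :=
    fun r => hy₁.sub (hε.1.mul_const r)
  have hderiv := hasDerivAt_integral_mul_comp_sub hk hμk hΨ hΨK
    (g₀ := fun u r => exp (κ₀ u - β₀ u * r)) (g₀' := fun u r => -β₀ u * exp (κ₀ u - β₀ u * r))
    (g₁ := fun u r => exp (κ₁ u - β₁ u * r)) (g₁' := fun u r => -β₁ u * exp (κ₁ u - β₁ u * r))
    (by fun_prop) (by fun_prop) (fun u => hasDerivAt_exp_sub_mul (κ₀ u) (β₀ u))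
    (by fun_prop) (by fun_prop) (fun u => hasDerivAt_exp_sub_mul (κ₁ u) (β₁ u)) hym₀ hym₁ hmatch
  have hC1 : ∀ {κ β y : U → ℝ}, Continuous κ → Continuous β → AEStronglyMeasurable y μ →
      ContDiff ℝ 1 fun r => ∫ u, -β u * exp (κ u - β u * r) * Ψ (y u - ε u * r) ∂μ :=
    fun {κ β y} hκ hβ hy => contDiff_integral_mul_comp_sub_mul hk hμk hΨ hΨK
      (g := fun u r => -β u * exp (κ u - β u * r))
      (g' := fun u r => -β u * (-β u * exp (κ u - β u * r))) (by fun_prop) (by fun_prop)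
      (fun u r => (hasDerivAt_exp_sub_mul _ _ r).const_mul _) hΨK' hy hε
  rw [← one_add_one_eq_two, contDiff_succ_iff_deriv, funext fun r => (hderiv r).deriv]
  refine ⟨fun r => (hderiv r).differentiableAt, by simp, ?_⟩
  simp_rw [fun r => MeasureTheory.integral_sub
    (integrable_mul_comp_of_abs_le (g := fun u => -β₀ u * exp (κ₀ u - β₀ u * r)) hk hμk
      (by fun_prop) hΨ.continuous hΨK (hym₀ r))
    (integrable_mul_comp_of_abs_le (g := fun u => -β₁ u * exp (κ₁ u - β₁ u * r)) hk hμk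
      (by fun_prop) hΨ.continuous hΨK (hym₁ r))]
  exact (hC1 hκ₀ hβ₀ hy₀).sub (hC1 hκ₁ hβ₁ hy₁)

end AffineParameter

section Model

/-- The function `B` for which the bond price `M a δ b s r` is `exp (c s - B s * r)`. -/
noncomputable def bondSlope (a s : ℝ) : ℝ := (1 - exp (-(a * s))) / a

/-- The function `c` for which the bond price `M a δ b s r` is `exp (c s - B s * r)`. -/
noncomputable def bondIntercept (a δ b s : ℝ) : ℝ :=
  -(b - δ ^ 2 / (2 * a ^ 2)) * s + (b - δ ^ 2 / (2 * a ^ 2)) / a * (1 - exp (-(a * s)))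
    - δ ^ 2 / (4 * a ^ 3) * (1 - exp (-(a * s))) ^ 2

/-- The mean of the Gaussian density `phiKer a δ b · u r`. -/
noncomputable def kernelMean (a δ b u r : ℝ) : ℝ :=
  r * exp (-(a * u)) + b * (1 - exp (-(a * u)))
    - δ ^ 2 / (2 * a ^ 2) * (1 - exp (-(a * u))) ^ 2

/-- The standard deviation of the Gaussian density `phiKer a δ b · u r`. -/
noncomputable def kernelStd (a δ u : ℝ) : ℝ := √(δ ^ 2 * bondSlope (2 * a) u)

/-- The critical rate at which `M a δ b s · = 1`, standardized for the Gaussian density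
`phiKer a δ b · u 0`. -/
noncomputable def standardBoundary (a δ b s u : ℝ) : ℝ :=
  (bondIntercept a δ b s / bondSlope a s - kernelMean a δ b u 0) / kernelStd a δ u

/-- The factor `M u r * (1 - M s z)` of the integrand of `gammaFun`, with the time `s` to maturity
as a free variable, at the point `p = (u, x)` where `x` is the standardized value of `z`. -/
noncomputable def discountedPayoff (a δ b r s : ℝ) (p : ℝ × ℝ) : ℝ :=
  M a δ b p.1 r * (1 - M a δ b s (kernelMean a δ b p.1 r + kernelStd a δ p.1 * p.2))

variable {a δ b r s t u T : ℝ}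

lemma M_eq_exp : M a δ b u r = exp (bondIntercept a δ b u - bondSlope a u * r) := by
  rw [M, bondIntercept, bondSlope]
  ring_nf

lemma contDiff_bondSlope {n : WithTop ℕ∞} : ContDiff ℝ n (bondSlope a) := by
  unfold bondSlope
  fun_prop

lemma contDiff_bondIntercept {n : WithTop ℕ∞} : ContDiff ℝ n (bondIntercept a δ b) := by
  unfold bondIntercept
  fun_prop

lemma continuous_kernelStd : Continuous (kernelStd a δ) :=
  (continuous_const.mul (contDiff_bondSlope (n := 0)).continuous).sqrt

lemma kernelMean_eq : kernelMean a δ b u r = kernelMean a δ b u 0 + exp (-(a * u)) * r := by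
  rw [kernelMean, kernelMean]
  ring

lemma mul_exp_neg_le_bondSlope (ha : a ≠ 0) (hs : 0 ≤ s) :
    s * exp (-(|a| * s)) ≤ bondSlope a s := by
  rw [bondSlope]
  rcases lt_or_gt_of_ne ha with ha | ha
  · rw [abs_of_neg ha, neg_mul, neg_neg, le_div_iff_of_neg ha]
    have h1 : exp (a * s) ≤ 1 := exp_le_one_iff.2 (mul_nonpos_of_nonpos_of_nonneg ha.le hs)
    nlinarith [add_one_le_exp (-(a * s)), mul_nonneg hs (neg_pos.2 ha).le]
  · rw [abs_of_pos ha, le_div_iff₀ ha]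
    have h1 : exp (-(a * s)) * exp (a * s) = 1 := by rw [← exp_add, neg_add_cancel, exp_zero]
    nlinarith [add_one_le_exp (a * s), exp_pos (-(a * s))]

lemma bondSlope_pos (ha : a ≠ 0) (hs : 0 < s) : 0 < bondSlope a s :=
  lt_of_lt_of_le (mul_pos hs (exp_pos _)) (mul_exp_neg_le_bondSlope ha hs.le)

lemma kernelStd_pos (ha : a ≠ 0) (hδ : δ ≠ 0) (hu : 0 < u) : 0 < kernelStd a δ u :=
  sqrt_pos.2 (mul_pos (by positivity) (bondSlope_pos (mul_ne_zero two_ne_zero ha) hu))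

lemma sq_kernelStd (ha : a ≠ 0) (hu : 0 ≤ u) : kernelStd a δ u ^ 2 = δ ^ 2 * bondSlope (2 * a) u :=
  sq_sqrt (mul_nonneg (sq_nonneg δ)
    ((mul_nonneg hu (exp_nonneg _)).trans (mul_exp_neg_le_bondSlope (by simpa using ha) hu)))

lemma bondSlope_mul_alphaCurve (ha : a ≠ 0) (ht : t < T) :
    bondSlope a (T - t) * alphaCurve a δ b T t = bondIntercept a δ b (T - t) := by
  have hB : 1 - exp (-(a * (T - t))) ≠ 0 := fun h =>
    (bondSlope_pos ha (sub_pos.2 ht)).ne' (by rw [bondSlope, h, zero_div])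
  rw [bondSlope, alphaCurve, bondIntercept]
  field_simp
  ring

lemma phiKer_eq_gaussianPDFReal (ha : a ≠ 0) (hu : 0 ≤ u) (z : ℝ) :
    phiKer a δ b z u r
      = gaussianPDFReal (kernelMean a δ b u r) (.mk (kernelStd a δ u ^ 2) (sq_nonneg _)) z := by
  rw [phiKer, gaussianPDFReal, NNReal.coe_mk, sq_kernelStd ha hu, bondSlope, kernelMean]
  congr 3
  · ring_nf
  · ring
  · ring

lemma integral_gaussianReal_eq_integral_standard {f : ℝ → ℝ} (hf : Continuous f) (m σ : ℝ) :
    ∫ z, f z ∂gaussianReal m (.mk (σ ^ 2) (sq_nonneg σ))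
      = ∫ x, f (m + σ * x) ∂gaussianReal 0 1 := by
  have h : gaussianReal m (.mk (σ ^ 2) (sq_nonneg σ))
      = (gaussianReal 0 1).map fun x => m + σ * x := by
    rw [← Function.comp_def (m + ·) (σ * ·),
      ← Measure.map_map (measurable_const_add m) (measurable_const_mul σ),
      gaussianReal_map_const_mul, gaussianReal_map_const_add, mul_zero, zero_add, mul_one]
  rw [h, integral_map (by fun_prop) hf.aestronglyMeasurable]

lemma max_zero_one_sub_M_eq_indicator (ha : a ≠ 0) (ht : t < T) :
    (fun z => max 0 (1 - M a δ b (T - t) z))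
      = (Ioi (alphaCurve a δ b T t)).indicator fun z => 1 - M a δ b (T - t) z := by
  have hM : ∀ z, M a δ b (T - t) z = exp (bondSlope a (T - t) * (alphaCurve a δ b T t - z)) := by
    intro z
    rw [M_eq_exp, mul_sub, bondSlope_mul_alphaCurve ha ht]
  simp only [hM]
  exact max_zero_one_sub_exp_eq_indicator (bondSlope_pos ha (sub_pos.2 ht)).le _

lemma setIntegral_gammaFun_integrand (ha : a ≠ 0) (hδ : δ ≠ 0) (hu : u ∈ Ioo 0 (T - t)) :
    ∫ z in Ioi (alphaCurve a δ b T (u + t)), M a δ b u r * (1 - M a δ b (T - u - t) z)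
        * phiKer a δ b z u r
      = ∫ x, max 0 (discountedPayoff a δ b r (T - t - u) (u, x)) ∂gaussianReal 0 1 := by
  have hs : T - (u + t) = T - t - u := by ring
  have hM : Continuous fun z => max 0 (1 - M a δ b (T - t - u) z) := by
    simp only [M_eq_exp]
    fun_prop
  have hσ : NNReal.mk (kernelStd a δ u ^ 2) (sq_nonneg _) ≠ 0 := fun h =>
    (pow_pos (kernelStd_pos ha hδ hu.1) 2).ne' (congrArg NNReal.toReal h)
  have hmax : ∀ x, max 0 (discountedPayoff a δ b r (T - t - u) (u, x)) = M a δ b u r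
      * max 0 (1 - M a δ b (T - t - u) (kernelMean a δ b u r + kernelStd a δ u * x)) := fun x => by
    rw [discountedPayoff, M, mul_max_of_nonneg _ _ (exp_nonneg _), mul_zero]
  simp only [hmax]
  rw [MeasureTheory.integral_const_mul,
    ← integral_gaussianReal_eq_integral_standard hM (kernelMean a δ b u r) (kernelStd a δ u),
    integral_gaussianReal_eq_integral_smul hσ, ← MeasureTheory.integral_const_mul,
    ← MeasureTheory.integral_indicator measurableSet_Ioi]
  congr 1
  funext z
  have hz := congrFun (max_zero_one_sub_M_eq_indicator (δ := δ) (b := b) ha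
    (lt_sub_iff_add_lt.1 hu.2)) z
  rw [hs] at hz
  rw [hz, ← phiKer_eq_gaussianPDFReal ha hu.1.le, show T - u - t = T - t - u by ring]
  simp only [indicator, smul_eq_mul]
  split_ifs
  · ring
  · rw [mul_zero, mul_zero]

lemma gammaFun_eq_setIntegral (ha : a ≠ 0) (hδ : δ ≠ 0) (ht : t ≤ T) :
    gammaFun a δ b T t r = ∫ u in Ioo 0 (T - t),
      ∫ x, max 0 (discountedPayoff a δ b r (T - t - u) (u, x)) ∂gaussianReal 0 1 := by
  rw [gammaFun, integral_of_le (sub_nonneg.2 ht), integral_Ioc_eq_integral_Ioo]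
  exact setIntegral_congr_fun measurableSet_Ioo fun u hu =>
    setIntegral_gammaFun_integrand ha hδ hu

lemma integral_max_zero_discountedPayoff (ha : a ≠ 0) (hδ : δ ≠ 0) (hu : 0 < u) (hs : 0 < s) :
    ∫ x, max 0 (discountedPayoff a δ b r s (u, x)) ∂gaussianReal 0 1
      = M a δ b u r * normalPut (bondSlope a s * kernelStd a δ u)
        (standardBoundary a δ b s u - exp (-(a * u)) / kernelStd a δ u * r) := by
  have hσ := kernelStd_pos ha hδ hu
  have hB := bondSlope_pos ha hs
  rw [← integral_max_zero_one_sub_exp (mul_pos hB hσ).le, ← MeasureTheory.integral_const_mul]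
  congr 1
  funext x
  rw [discountedPayoff, M_eq_exp, M_eq_exp (u := s), ← mul_zero (exp _),
    ← mul_max_of_nonneg _ _ (exp_nonneg _), mul_zero, standardBoundary, kernelMean_eq (r := r)]
  congr 5
  field_simp
  ring

lemma M_mul_exp_standardBoundary (hσ : kernelStd a δ u ≠ 0) (hB : bondSlope a s ≠ 0) :
    M a δ b u r * exp (bondSlope a s * kernelStd a δ u
        * (standardBoundary a δ b s u - exp (-(a * u)) / kernelStd a δ u * r)
        + (bondSlope a s * kernelStd a δ u) ^ 2 / 2)
      = exp (bondIntercept a δ b u + bondIntercept a δ b s - bondSlope a s * kernelMean a δ b u 0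
        + (bondSlope a s * kernelStd a δ u) ^ 2 / 2
        - (bondSlope a u + bondSlope a s * exp (-(a * u))) * r) := by
  rw [M_eq_exp, ← exp_add, standardBoundary]
  congr 1
  field_simp
  ring

lemma mul_sqrt_le_kernelStd (ha : a ≠ 0) {τ : ℝ} (hu : u ∈ Icc 0 τ) :
    |δ| * exp (-(|a| * τ)) * √u ≤ kernelStd a δ u := by
  refine le_sqrt_of_sq_le ?_
  calc (|δ| * exp (-(|a| * τ)) * √u) ^ 2 = δ ^ 2 * (u * exp (-(|2 * a| * τ))) := by
        rw [mul_pow, mul_pow, sq_abs, sq_sqrt hu.1, ← exp_nat_mul, abs_mul, abs_two]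
        push_cast
        ring_nf
    _ ≤ δ ^ 2 * (u * exp (-(|2 * a| * u))) := by
        have hu0 := hu.1
        have huτ := hu.2
        gcongr
    _ ≤ δ ^ 2 * bondSlope (2 * a) u := by
        gcongr
        exact mul_exp_neg_le_bondSlope (mul_ne_zero two_ne_zero ha) hu.1

lemma integrableOn_inv_kernelStd (ha : a ≠ 0) (hδ : δ ≠ 0) (τ : ℝ) :
    IntegrableOn (fun u => (kernelStd a δ u)⁻¹) (Ioo 0 τ) := by
  have hrpow : IntegrableOn (fun u : ℝ => u ^ (-(1 / 2) : ℝ)) (Ioo 0 τ) :=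
    (intervalIntegrable_rpow' (by norm_num)).1.mono_set Ioo_subset_Ioc_self
  refine (hrpow.const_mul (|δ| * exp (-(|a| * τ)))⁻¹).mono'
    continuous_kernelStd.measurable.inv.aestronglyMeasurable ?_
  refine (ae_restrict_mem measurableSet_Ioo).mono fun u hu => ?_
  have hle := mul_sqrt_le_kernelStd (δ := δ) ha (Ioo_subset_Icc_self hu)
  have hpos : 0 < |δ| * exp (-(|a| * τ)) * √u :=
    mul_pos (mul_pos (abs_pos.2 hδ) (exp_pos _)) (sqrt_pos.2 hu.1)
  rw [rpow_neg hu.1.le, ← sqrt_eq_rpow, ← mul_inv,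
    norm_of_nonneg (inv_nonneg.2 (hpos.le.trans hle))]
  exact inv_anti₀ hpos hle

lemma gammaFun_eq_setIntegral_normalTail (ha : a ≠ 0) (hδ : δ ≠ 0) (ht : t ≤ T) :
    gammaFun a δ b T t r = ∫ u in Ioo 0 (T - t),
      (exp (bondIntercept a δ b u - bondSlope a u * r)
        * normalTail (standardBoundary a δ b (T - t - u) u - exp (-(a * u)) / kernelStd a δ u * r)
      - exp (bondIntercept a δ b u + bondIntercept a δ b (T - t - u)
          - bondSlope a (T - t - u) * kernelMean a δ b u 0
          + (bondSlope a (T - t - u) * kernelStd a δ u) ^ 2 / 2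
          - (bondSlope a u + bondSlope a (T - t - u) * exp (-(a * u))) * r)
        * normalTail (standardBoundary a δ b (T - t - u) u
          + bondSlope a (T - t - u) * kernelStd a δ u
          - exp (-(a * u)) / kernelStd a δ u * r)) := by
  rw [gammaFun_eq_setIntegral ha hδ ht]
  refine setIntegral_congr_fun measurableSet_Ioo fun u hu => ?_
  rw [integral_max_zero_discountedPayoff ha hδ hu.1 (sub_pos.2 hu.2), normalPut,
    ← M_mul_exp_standardBoundary (kernelStd_pos ha hδ hu.1).ne'
      (bondSlope_pos ha (sub_pos.2 hu.2)).ne', ← M_eq_exp, add_sub_right_comm]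
  ring

lemma contDiff_two_gammaFun (ha : a ≠ 0) (hδ : δ ≠ 0) (ht : t ≤ T) :
    ContDiff ℝ 2 fun r => gammaFun a δ b T t r := by
  have hB : Continuous (bondSlope a) := (contDiff_bondSlope (n := 0)).continuous
  have hc : Continuous (bondIntercept a δ b) := (contDiff_bondIntercept (n := 0)).continuous
  have hσ : Continuous (kernelStd a δ) := continuous_kernelStd
  have hm : Continuous (kernelMean a δ b · 0) := by
    simp only [kernelMean]
    fun_prop
  have hy : Measurable fun u => standardBoundary a δ b (T - t - u) u := by
    simp only [standardBoundary]
    fun_prop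
  have hε : IntegrableOn (fun u => exp (-(a * u)) / kernelStd a δ u) (Ioo 0 (T - t)) :=
    (integrableOn_inv_kernelStd ha hδ _).continuousOn_mul_of_subset (by fun_prop)
      isCompact_Icc measurableSet_Ioo Ioo_subset_Icc_self
  simp only [gammaFun_eq_setIntegral_normalTail ha hδ ht]
  refine contDiff_two_integral_exp_mul_comp_sub isCompact_Icc
    ((ae_restrict_mem measurableSet_Ioo).mono fun u hu => Ioo_subset_Icc_self hu)
    contDiff_normalTail abs_normalTail_le_one hc hB (by fun_prop) (by fun_prop)
    abs_deriv_normalTail_le_one hy.aestronglyMeasurable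
    (hy.add (by fun_prop)).aestronglyMeasurable hε ?_
  filter_upwards [ae_restrict_mem measurableSet_Ioo] with u hu r
  rw [← M_mul_exp_standardBoundary (kernelStd_pos ha hδ hu.1).ne'
      (bondSlope_pos ha (sub_pos.2 hu.2)).ne', ← M_eq_exp, deriv_normalTail, deriv_normalTail,
    add_sub_right_comm, gaussianPDFReal_eq_exp_mul (bondSlope a (T - t - u) * kernelStd a δ u)]
  ring

lemma continuous_uncurry_discountedPayoff :
    Continuous (uncurry (discountedPayoff a δ b r)) := by
  have hB : Continuous (bondSlope a) := (contDiff_bondSlope (n := 0)).continuous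
  have hc : Continuous (bondIntercept a δ b) := (contDiff_bondIntercept (n := 0)).continuous
  have hσ : Continuous (kernelStd a δ) := continuous_kernelStd
  unfold uncurry discountedPayoff kernelMean
  simp only [M_eq_exp]
  fun_prop

lemma discountedPayoff_zero (p : ℝ × ℝ) : discountedPayoff a δ b r 0 p = 0 := by
  simp [discountedPayoff, M]

lemma contDiff_discountedPayoff (p : ℝ × ℝ) :
    ContDiff ℝ 1 (discountedPayoff a δ b r · p) := by
  have hB : ContDiff ℝ 1 (bondSlope a) := contDiff_bondSlope
  have hc : ContDiff ℝ 1 (bondIntercept a δ b) := contDiff_bondIntercept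
  unfold discountedPayoff
  simp only [M_eq_exp]
  fun_prop

lemma deriv_discountedPayoff (s : ℝ) (p : ℝ × ℝ) :
    deriv (discountedPayoff a δ b r · p) s
      = -(exp (bondIntercept a δ b p.1 - bondSlope a p.1 * r + bondIntercept a δ b s
          - bondSlope a s * kernelMean a δ b p.1 r - bondSlope a s * kernelStd a δ p.1 * p.2)
        * (deriv (bondIntercept a δ b) s - deriv (bondSlope a) s * kernelMean a δ b p.1 r
          - deriv (bondSlope a) s * kernelStd a δ p.1 * p.2)) := by
  have hB : HasDerivAt (bondSlope a) (deriv (bondSlope a) s) s :=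
    ((contDiff_bondSlope (n := 1)).differentiable one_ne_zero s).hasDerivAt
  have hc : HasDerivAt (bondIntercept a δ b) (deriv (bondIntercept a δ b) s) s :=
    ((contDiff_bondIntercept (n := 1)).differentiable one_ne_zero s).hasDerivAt
  have h := (((hc.sub (hB.mul_const (kernelMean a δ b p.1 r + kernelStd a δ p.1 * p.2))).exp
    ).const_sub 1).const_mul (M a δ b p.1 r)
  simp only [discountedPayoff, M_eq_exp]
  rw [M_eq_exp] at h
  refine h.deriv.trans ?_
  rw [Pi.sub_apply, mul_neg, ← mul_assoc, ← exp_add]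
  ring_nf

lemma abs_exp_sub_mul_mul_le {k θ P R C : ℝ} (hk : |k| ≤ C) (hθ : |θ| ≤ C) (hP : |P| ≤ C)
    (hR : |R| ≤ C) (x : ℝ) :
    |exp (k - θ * x) * (P - R * x)| ≤ C * exp C * exp ((C + 1) * |x|) := by
  have hC : 0 ≤ C := (abs_nonneg k).trans hk
  have hmul : ∀ {y : ℝ}, |y| ≤ C → |y * x| ≤ C * |x| := fun hy => by
    rw [abs_mul]
    exact mul_le_mul_of_nonneg_right hy (abs_nonneg x)
  have hexp : exp (k - θ * x) ≤ exp (C + C * |x|) :=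
    exp_le_exp.2 ((le_abs_self _).trans ((abs_sub _ _).trans (add_le_add hk (hmul hθ))))
  have hlin : |P - R * x| ≤ C * exp |x| := calc
    |P - R * x| ≤ C + C * |x| := (abs_sub _ _).trans (add_le_add hP (hmul hR))
    _ = C * (|x| + 1) := by ring
    _ ≤ C * exp |x| := mul_le_mul_of_nonneg_left (add_one_le_exp _) hC
  calc |exp (k - θ * x) * (P - R * x)| = exp (k - θ * x) * |P - R * x| := by
        rw [abs_mul, abs_exp]
    _ ≤ exp (C + C * |x|) * (C * exp |x|) := by gcongr
    _ = C * exp C * exp ((C + 1) * |x|) := by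
        rw [add_mul, one_mul, exp_add, exp_add]
        ring

lemma integrable_exp_mul_abs_gaussianReal {m : ℝ} {v : NNReal} (c : ℝ) :
    Integrable (fun x => exp (c * |x|)) (gaussianReal m v) :=
  integrable_exp_mul_abs (integrable_exp_mul_gaussianReal c) (integrable_exp_mul_gaussianReal (-c))

lemma exists_lipschitzOnWith_discountedPayoff (a δ b r S : ℝ) :
    ∃ L : ℝ → ℝ, Integrable L (gaussianReal 0 1) ∧ ∀ u ∈ Icc 0 S, ∀ x,
      LipschitzOnWith (Real.nnabs (L x)) (discountedPayoff a δ b r · (u, x)) (Icc 0 S) := by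
  have hB : ContDiff ℝ 1 (bondSlope a) := contDiff_bondSlope
  have hc : ContDiff ℝ 1 (bondIntercept a δ b) := contDiff_bondIntercept
  have hσ : Continuous (kernelStd a δ) := continuous_kernelStd
  have hm : Continuous (kernelMean a δ b · r) := by
    simp only [kernelMean]
    fun_prop
  have hcoeff : Continuous fun q : ℝ × ℝ =>
      (bondIntercept a δ b q.1 - bondSlope a q.1 * r + bondIntercept a δ b q.2
          - bondSlope a q.2 * kernelMean a δ b q.1 r,
        bondSlope a q.2 * kernelStd a δ q.1,
        deriv (bondIntercept a δ b) q.2 - deriv (bondSlope a) q.2 * kernelMean a δ b q.1 r,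
        deriv (bondSlope a) q.2 * kernelStd a δ q.1) := by
    fun_prop
  obtain ⟨C, hC⟩ := (isCompact_Icc (a := (0 : ℝ)) (b := S)).prod isCompact_Icc
    |>.exists_bound_of_continuousOn hcoeff.continuousOn
  refine ⟨fun x => C * exp C * exp ((C + 1) * |x|),
    (integrable_exp_mul_abs_gaussianReal _).const_mul _, fun u hu x => ?_⟩
  refine (convex_Icc 0 S).lipschitzOnWith_of_nnnorm_deriv_le
    (fun s _ => (contDiff_discountedPayoff _).differentiable one_ne_zero s) fun s hs => ?_
  have hbound := hC (u, s) ⟨hu, hs⟩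
  simp only [Prod.norm_def, max_le_iff] at hbound
  obtain ⟨hk, hθ, hP, hR⟩ := hbound
  rw [← NNReal.coe_le_coe, coe_nnnorm, Real.coe_nnabs, deriv_discountedPayoff, norm_neg]
  exact (abs_exp_sub_mul_mul_le hk hθ hP hR x).trans (le_abs_self _)

lemma bondSlope_ne_zero (ha : a ≠ 0) (hs : s ≠ 0) : bondSlope a s ≠ 0 :=
  div_ne_zero (sub_ne_zero.2 fun h => mul_ne_zero ha hs
    (neg_eq_zero.1 ((exp_eq_one_iff _).1 h.symm))) ha

lemma ae_discountedPayoff_ne_zero (ha : a ≠ 0) (hδ : δ ≠ 0) (hu : 0 < u) (hs : s ≠ 0) :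
    ∀ᵐ x ∂gaussianReal 0 1, discountedPayoff a δ b r s (u, x) ≠ 0 := by
  have hsub : {x | discountedPayoff a δ b r s (u, x) = 0}.Subsingleton := by
    intro x hx y hy
    simp only [mem_ofPred_eq, discountedPayoff, M_eq_exp, mul_eq_zero, exp_ne_zero, false_or,
      sub_eq_zero (a := (1 : ℝ)), eq_comm (a := (1 : ℝ)), exp_eq_one_iff] at hx hy
    have hmul : bondSlope a s * kernelStd a δ u * x = bondSlope a s * kernelStd a δ u * y := by
      linarith
    exact mul_left_cancel₀
      (mul_ne_zero (bondSlope_ne_zero ha hs) (kernelStd_pos ha hδ hu).ne') hmul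
  have := nullSingletonClass_gaussianReal (μ := 0) (v := 1) one_ne_zero
  exact compl_mem_ae_iff.2 (hsub.measure_zero _)

lemma ae_ne_and_discountedPayoff_ne_zero (ha : a ≠ 0) (hδ : δ ≠ 0) (S τ : ℝ) :
    ∀ᵐ p ∂(volume.restrict (Ioo 0 S)).prod (gaussianReal 0 1),
      p.1 ≠ τ ∧ discountedPayoff a δ b r (τ - p.1) p ≠ 0 := by
  have hcont : Continuous fun p : ℝ × ℝ => discountedPayoff a δ b r (τ - p.1) p :=
    continuous_uncurry_discountedPayoff.comp
      ((continuous_const.sub continuous_fst).prodMk continuous_id)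
  refine (Measure.ae_prod_iff_ae_ae ((measurableSet_eq_fun measurable_fst measurable_const).compl
    |>.inter (measurableSet_eq_fun hcont.measurable measurable_const).compl)).2 ?_
  filter_upwards [ae_restrict_mem measurableSet_Ioo,
    ae_restrict_of_ae (Measure.ae_ne volume τ)] with u hu hne
  filter_upwards [ae_discountedPayoff_ne_zero ha hδ hu.1 (sub_ne_zero.2 hne.symm)] with x hx
  exact ⟨hne, hx⟩

lemma exists_ae_lipschitzOnWith_discountedPayoff (a δ b r S : ℝ) :
    ∃ L : ℝ × ℝ → ℝ, Integrable L ((volume.restrict (Ioo 0 S)).prod (gaussianReal 0 1)) ∧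
      ∀ᵐ p ∂(volume.restrict (Ioo 0 S)).prod (gaussianReal 0 1),
        LipschitzOnWith (Real.nnabs (L p)) (discountedPayoff a δ b r · p) (Icc 0 S) := by
  obtain ⟨L, hL, hlip⟩ := exists_lipschitzOnWith_discountedPayoff a δ b r S
  refine ⟨fun p => L p.2, hL.comp_snd _, ?_⟩
  filter_upwards [ae_prod_restrict_fst_mem measurableSet_Ioo] with p hp
  exact hlip p.1 (Ioo_subset_Icc_self hp) p.2

lemma gammaFun_eq_integral_prod {S : ℝ} (ha : a ≠ 0) (hδ : δ ≠ 0) (ht : t ≤ T) (hS : T - t ≤ S) :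
    gammaFun a δ b T t r
      = ∫ p, max 0 (discountedPayoff a δ b r (max 0 (T - t - p.1)) p)
          ∂(volume.restrict (Ioo 0 S)).prod (gaussianReal 0 1) := by
  obtain ⟨L, hL, hlip⟩ := exists_ae_lipschitzOnWith_discountedPayoff a δ b r S
  have hintgr := integrable_max_zero_comp_max_zero ((sub_nonneg.2 ht).trans hS)
    continuous_uncurry_discountedPayoff.measurable measurable_fst
    ((ae_prod_restrict_fst_mem measurableSet_Ioo).mono fun p hp => hp.1.le)
    discountedPayoff_zero hL hlip hS
  rw [integral_prod _ hintgr, gammaFun_eq_setIntegral ha hδ ht]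
  refine Eq.trans (setIntegral_congr_fun measurableSet_Ioo fun u hu => ?_)
    (setIntegral_eq_of_subset_of_forall_sdiff_eq_zero measurableSet_Ioo
      (Ioo_subset_Ioo_right hS) fun u hu => ?_).symm
  · simp only [max_eq_right (sub_pos.2 hu.2).le]
  · have hle : T - t - u ≤ 0 := sub_nonpos.2 (not_lt.1 fun h => hu.2 ⟨hu.1.1, h⟩)
    simp only [max_eq_left hle, discountedPayoff_zero, max_self, integral_zero]

lemma contDiffAt_one_gammaFun (ha : a ≠ 0) (hδ : δ ≠ 0) (ht : t < T) :
    ContDiffAt ℝ 1 (fun t' => gammaFun a δ b T t' r) t := by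
  have hS : 0 ≤ T - t + 1 := by linarith
  obtain ⟨L, hL, hlip⟩ := exists_ae_lipschitzOnWith_discountedPayoff a δ b r (T - t + 1)
  have hreg := contDiffOn_integral_max_zero hS continuous_uncurry_discountedPayoff.measurable
    measurable_fst ((ae_prod_restrict_fst_mem measurableSet_Ioo).mono fun p hp => hp.1.le)
    discountedPayoff_zero hL hlip contDiff_discountedPayoff
    fun τ _ => ae_ne_and_discountedPayoff_ne_zero ha hδ (T - t + 1) τ
  have hreg_at := hreg.contDiffAt (Iio_mem_nhds (lt_add_one (T - t)))
  refine (hreg_at.comp (f := fun t' => T - t') t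
    (contDiffAt_const.sub contDiffAt_id)).congr_of_eventuallyEq ?_
  filter_upwards [Ioo_mem_nhds (sub_one_lt t) ht] with t' ht'
  exact gammaFun_eq_integral_prod ha hδ ht'.2.le (by linarith [ht'.1])

end Model

theorem gamma_C12_general {a δ t T : ℝ} (ha : a ≠ 0) (hδ : δ ≠ 0) (ht : t < T) (b r : ℝ) :
    ContDiffAt ℝ 1 (fun t' => gammaFun a δ b T t' r) t ∧
      ContDiff ℝ 2 (fun r' => gammaFun a δ b T t r') :=
  ⟨contDiffAt_one_gammaFun ha hδ ht, contDiff_two_gammaFun ha hδ ht.le⟩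

/-- `γ ∈ C^{1,2}((0,T) × ℝ)`: at every `(t,r) ∈ (0,T) × ℝ`, `γ` is
continuously differentiable in `t` and twice continuously differentiable in `r`. -/
theorem gamma_C12 (a δ b T : ℝ) (ha : 0 < a) (hδ : 0 < δ) (hT : 0 < T) :
    ∀ t : ℝ, 0 < t → t < T → ∀ r : ℝ,
      ContDiffAt ℝ 1 (fun t' => gammaFun a δ b T t' r) t ∧
      ContDiffAt ℝ 2 (fun r' => gammaFun a δ b T t r') r := by
  intro t _ ht r
  exact (gamma_C12_general ha.ne' hδ.ne' ht b r).imp_right ContDiff.contDiffAt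
end

section
/- For every (t,r) ∈ (0,T) × ℝ, the function γ satisfies the partial differential equation ∂_t γ(t,r) + a(b−r)·∂_r γ(t,r) + (δ²/2)·∂_{rr} γ(t,r) − r·γ(t,r) + 1_{{r > α(t)}}·(1 − M(T−t, r)) = 0. -/
open Real Filter MeasureTheory intervalIntegral

/-!
Put `τ = T - t`. Completing the square in the inner Gaussian integral writes `γ(t,r)` as
`∫₀^τ V(u, τ - u, r) du`, where `V(u,v,r)` is the Black–Scholes type value of a put, struck at par
and expiring after time `u`, on a bond with a further time `v` to maturity. Since the forward rate
`-∂ᵤ log M(u,r)` is also the mean of the Gaussian kernel, and the strike is at par, `V` satisfies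
the pricing equation `∂ᵤV = L V` with `L = a(b - r) ∂ᵣ + (δ²/2) ∂ᵣᵣ - r`. Hence, along `v = τ - u`,
`d/du V = L V - ∂ᵥV`. Integrating over `(0,τ)` gives
`∫ L V - ∫ ∂ᵥV = V(τ,0,r) - V(0⁺,τ,r) = -1_{r > α(t)} (1 - M(τ,r))`, and `∂_t γ = -∫ ∂ᵥV` because
`V(·,0,r) = 0` removes the boundary term of Leibniz' rule.
-/

section

open ProbabilityTheory Set Topology NNReal

local notation "ϕ" => gaussianPDFReal 0 1
local notation "Φ" => cdf (gaussianReal 0 1)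

lemma hasDerivAt_cdf_gaussianReal (μ : ℝ) {v : ℝ≥0} (hv : v ≠ 0) (x : ℝ) :
    HasDerivAt (cdf (gaussianReal μ v)) (gaussianPDFReal μ v x) x := by
  have hint := integrable_gaussianPDFReal μ v
  have hcont : Continuous (gaussianPDFReal μ v) := by
    rw [gaussianPDFReal_def]
    fun_prop
  have hcdf (y : ℝ) : cdf (gaussianReal μ v) y = ∫ z in Iic y, gaussianPDFReal μ v z := by
    rw [cdf_eq_real, Measure.real, gaussianReal_apply_eq_integral _ hv, ENNReal.toReal_ofReal]
    exact integral_nonneg (gaussianPDFReal_nonneg μ v)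
  have hsplit : ⇑(cdf (gaussianReal μ v)) = fun y =>
      (∫ z in Iic 0, gaussianPDFReal μ v z) + ∫ z in (0 : ℝ)..y, gaussianPDFReal μ v z := by
    ext y
    rw [hcdf, ← integral_Iic_sub_Iic hint.integrableOn hint.integrableOn, add_sub_cancel]
  rw [hsplit]
  exact (integral_hasDerivAt_right hint.intervalIntegrable
    (hcont.stronglyMeasurableAtFilter _ _) hcont.continuousAt).const_add _

@[fun_prop]
lemma differentiable_stdNormalCDF : Differentiable ℝ Φ := fun x =>
  (hasDerivAt_cdf_gaussianReal 0 one_ne_zero x).differentiableAt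

@[fun_prop]
lemma measurable_stdNormalCDF : Measurable Φ :=
  differentiable_stdNormalCDF.continuous.measurable

lemma stdNormalPDF_le_one (x : ℝ) : ϕ x ≤ 1 := by
  have hsqrt : 1 ≤ √(2 * π * (1 : ℝ≥0)) :=
    Real.one_le_sqrt.2 (by norm_num; linarith [Real.pi_gt_three])
  rw [gaussianPDFReal]
  refine mul_le_one₀ (inv_le_one_of_one_le₀ hsqrt) (exp_pos _).le (exp_le_one_iff.2 ?_)
  exact div_nonpos_of_nonpos_of_nonneg (neg_nonpos.2 (sq_nonneg _)) (by positivity)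

lemma abs_mul_stdNormalPDF_le (p x : ℝ) : |p * ϕ x| ≤ |p| := by
  rw [abs_mul, abs_of_nonneg (gaussianPDFReal_nonneg 0 1 x)]
  exact mul_le_of_le_one_right (abs_nonneg p) (stdNormalPDF_le_one x)

lemma abs_mul_stdNormalCDF_le (p x : ℝ) : |p * Φ x| ≤ |p| := by
  rw [abs_mul, abs_of_nonneg (cdf_nonneg _ x)]
  exact mul_le_of_le_one_right (abs_nonneg p) (cdf_le_one _ x)

lemma abs_mul_stdNormalCDF_sub_le (p q x y : ℝ) : |p * Φ x - q * Φ y| ≤ |p| + |q| :=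
  (abs_sub _ _).trans (add_le_add (abs_mul_stdNormalCDF_le p x) (abs_mul_stdNormalCDF_le q y))

lemma lipschitzWith_stdNormalCDF : LipschitzWith 1 Φ := by
  refine lipschitzWith_of_nnnorm_deriv_le differentiable_stdNormalCDF fun x => ?_
  rw [(hasDerivAt_cdf_gaussianReal 0 one_ne_zero x).deriv, ← NNReal.coe_le_coe, coe_nnnorm,
    Real.norm_of_nonneg (gaussianPDFReal_nonneg 0 1 x)]
  exact stdNormalPDF_le_one x

lemma integrable_stdNormalPDF_affine {s : ℝ} (hs : s ≠ 0) (m e : ℝ) :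
    Integrable fun z => ϕ ((m - z) / s - e) / s :=
  ((((integrable_gaussianPDFReal 0 1).comp_sub_right e).comp_div hs).comp_sub_left m).div_const s

lemma integral_Ioi_stdNormalPDF_affine {s : ℝ} (hs : 0 < s) (m e x : ℝ) :
    ∫ z in Ioi x, ϕ ((m - z) / s - e) / s = Φ ((m - x) / s - e) := by
  have hderiv (z : ℝ) : HasDerivAt (fun z => -Φ ((m - z) / s - e)) (ϕ ((m - z) / s - e) / s) z := by
    have haff := (((hasDerivAt_id z).const_sub m).div_const s).sub_const e
    refine ((hasDerivAt_cdf_gaussianReal 0 one_ne_zero _).comp z haff).neg.congr_deriv ?_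
    simp only [id]
    ring
  have hlim : Tendsto (fun z => (m - z) / s - e) atTop atBot :=
    tendsto_atBot_add_const_right _ (-e)
      ((tendsto_atBot_add_const_left _ m tendsto_neg_atTop_atBot).atBot_div_const hs)
  rw [integral_Ioi_of_hasDerivAt_of_nonneg' (fun z _ => hderiv z)
    (fun z _ => div_nonneg (gaussianPDFReal_nonneg 0 1 _) hs.le)
    ((tendsto_cdf_atBot _).comp hlim).neg]
  ring

lemma hasDerivAt_mul_stdNormalCDF_sub {P Q d e : ℝ → ℝ} {P' Q' d' e' x : ℝ}
    (hP : HasDerivAt P P' x) (hQ : HasDerivAt Q Q' x) (hd : HasDerivAt d d' x)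
    (he : HasDerivAt e e' x) :
    HasDerivAt (fun x => P x * Φ (d x) - Q x * Φ (e x))
      (P' * Φ (d x) - Q' * Φ (e x) + (P x * ϕ (d x) * d' - Q x * ϕ (e x) * e')) x := by
  have hΦ := hasDerivAt_cdf_gaussianReal 0 one_ne_zero
  refine ((hP.mul ((hΦ (d x)).comp x hd)).sub (hQ.mul ((hΦ (e x)).comp x he))).congr_deriv ?_
  simp only [Function.comp_apply]
  ring

section ParametricIntegral

lemma hasDerivAt_integral_of_abs_le_mul {F F' : ℝ → ℝ → ℝ} {G : ℝ × ℝ → ℝ} {k : ℝ → ℝ}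
    {p q x : ℝ} (hF : ∀ y, Measurable (F y)) (hF' : Measurable (F' x))
    (hint : IntervalIntegrable (F x) volume p q) (hG : Continuous G)
    (hk : IntervalIntegrable k volume p q) (hk0 : ∀ u, 0 ≤ k u)
    (hbound : ∀ u y, |F' y u| ≤ G (u, y) * k u)
    (hderiv : ∀ u ∈ uIoc p q, ∀ y, HasDerivAt (F · u) (F' y u) y) :
    IntervalIntegrable (F' x) volume p q ∧
      HasDerivAt (fun y => ∫ u in p..q, F y u) (∫ u in p..q, F' x u) x := by
  obtain ⟨C, hC⟩ := (isCompact_uIcc.prod (isCompact_closedBall x 1)).exists_bound_of_continuousOn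
    (s := uIcc p q ×ˢ Metric.closedBall x 1) hG.continuousOn
  refine hasDerivAt_integral_of_dominated_loc_of_deriv_le (bound := fun u => C * k u)
    (Metric.closedBall_mem_nhds x one_pos) (.of_forall fun y => (hF y).aestronglyMeasurable) hint
    hF'.aestronglyMeasurable (.of_forall fun u hu y hy => ?_) (hk.const_mul C)
    (.of_forall fun u hu y _ => hderiv u hu y)
  have hGC : G (u, y) ≤ C := (le_abs_self _).trans (hC _ ⟨uIoc_subset_uIcc hu, hy⟩)
  exact (hbound u y).trans (mul_le_mul_of_nonneg_right hGC (hk0 u))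

variable {E : Type*} [NormedAddCommGroup E]

lemma lipschitzOnWith_comp_max_sub {g : ℝ → E} {K : ℝ≥0} {u τ₁ : ℝ}
    (hg : LipschitzOnWith K g (Icc 0 τ₁)) (hu : 0 ≤ u) :
    LipschitzOnWith K (fun σ => g (max (σ - u) 0)) (Icc 0 τ₁) := by
  have hmax : LipschitzWith 1 fun σ => max (σ - u) 0 :=
    (LipschitzWith.mk_one fun x y => (dist_sub_right x y u).le).max_const 0
  have hmem : MapsTo (fun σ => max (σ - u) 0) (Icc 0 τ₁) (Icc 0 τ₁) := fun σ hσ =>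
    ⟨le_max_right _ _, max_le (by linarith [hσ.2]) (hσ.1.trans hσ.2)⟩
  simpa [Function.comp_def] using hg.comp hmax.lipschitzOnWith hmem

variable [NormedSpace ℝ E]

lemma hasDerivAt_comp_max_sub {g g' : ℝ → E} (hg : ∀ v, 0 < v → HasDerivAt g (g' v) v)
    {u τ : ℝ} (hne : u ≠ τ) :
    HasDerivAt (fun σ => g (max (σ - u) 0)) (if u ≤ τ then g' (τ - u) else 0) τ := by
  rcases hne.lt_or_gt with h | h
  · rw [if_pos h.le]
    refine ((hg _ (sub_pos.2 h)).comp_sub_const τ u).congr_of_eventuallyEq ?_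
    filter_upwards [lt_mem_nhds h] with σ hσ
    rw [max_eq_left (sub_nonneg.2 hσ.le)]
  · rw [if_neg h.not_ge]
    refine (hasDerivAt_const τ (g 0)).congr_of_eventuallyEq ?_
    filter_upwards [gt_mem_nhds h] with σ hσ
    rw [max_eq_right (sub_nonpos.2 hσ.le)]

lemma integral_comp_max_sub {f : ℝ → ℝ → E} (hzero : ∀ u, 0 < u → f u 0 = 0) {σ τ₁ : ℝ}
    (hσ : σ ∈ Icc 0 τ₁) :
    ∫ u in 0..τ₁, f u (max (σ - u) 0) = ∫ u in 0..σ, f u (σ - u) := by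
  rw [← integral_indicator hσ]
  refine integral_congr_Ioo_of_le (hσ.1.trans hσ.2) fun u hu => ?_
  rcases le_or_gt u σ with h | h
  · rw [indicator_of_mem (s := {u | u ≤ σ}) h, max_eq_left (sub_nonneg.2 h)]
  · rw [indicator_of_notMem (s := {u | u ≤ σ}) h.not_ge, max_eq_right (sub_nonpos.2 h.le),
      hzero u hu.1]

-- As `f u` vanishes at `0`, extending it by `0` to negative arguments keeps it Lipschitz, and the
-- moving endpoint of the integral becomes a fixed one.
lemma hasDerivAt_integral_comp_sub {f f' : ℝ → ℝ → E} {K : ℝ≥0} {τ τ₁ : ℝ} (hτ : τ ∈ Ioo 0 τ₁)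
    (hf : StronglyMeasurable (Function.uncurry f)) (hf' : StronglyMeasurable (Function.uncurry f'))
    (hzero : ∀ u, 0 < u → f u 0 = 0)
    (hlip : ∀ u ∈ Ioc 0 τ₁, LipschitzOnWith K (f u) (Icc 0 τ₁))
    (hderiv : ∀ u v, 0 < u → 0 < v → HasDerivAt (f u) (f' u v) v) :
    IntervalIntegrable (fun u => f' u (τ - u)) volume 0 τ ∧
      HasDerivAt (fun σ => ∫ u in 0..σ, f u (σ - u)) (∫ u in 0..τ, f' u (τ - u)) τ := by
  have hpos : 0 ≤ τ₁ := (hτ.1.trans hτ.2).le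
  have hmeas (σ : ℝ) : StronglyMeasurable fun u => f u (max (σ - u) 0) :=
    hf.comp_measurable (by fun_prop : Measurable fun u => (u, max (σ - u) 0))
  have hmeas' : StronglyMeasurable ({u | u ≤ τ}.indicator fun u => f' u (τ - u)) :=
    (hf'.comp_measurable (by fun_prop : Measurable fun u => (u, τ - u))).indicator measurableSet_Iic
  have hlip' : ∀ u ∈ Ioc 0 τ₁,
      LipschitzOnWith (nnabs K) (fun σ => f u (max (σ - u) 0)) (Icc 0 τ₁) := fun u hu => by
    simpa using lipschitzOnWith_comp_max_sub (hlip u hu) hu.1.le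
  have hbound : ∀ u ∈ Ioc 0 τ₁, ‖f u (max (τ - u) 0)‖ ≤ K * τ := fun u hu => by
    simpa [hu.1.le, hzero u hu.1, abs_of_pos hτ.1] using
      (hlip' u hu).norm_sub_le (Ioo_subset_Icc_self hτ) (left_mem_Icc.2 hpos)
  rw [← uIoc_of_le hpos] at hbound hlip'
  obtain ⟨hint, hF⟩ := hasDerivAt_integral_of_dominated_loc_of_lip (μ := volume)
    (F := fun σ u => f u (max (σ - u) 0)) (Icc_mem_nhds hτ.1 hτ.2)
    (.of_forall fun σ => (hmeas σ).aestronglyMeasurable)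
    (intervalIntegrable_const.mono_fun' (hmeas τ).aestronglyMeasurable
      (ae_restrict_of_forall_mem measurableSet_uIoc hbound))
    hmeas'.aestronglyMeasurable (.of_forall hlip') intervalIntegrable_const
    ((Measure.ae_ne volume τ).mono fun u hne hu =>
      hasDerivAt_comp_max_sub (fun v => hderiv u v (uIoc_of_le hpos ▸ hu).1) hne)
  rw [integral_indicator (Ioo_subset_Icc_self hτ)] at hF
  refine ⟨?_, hF.congr_of_eventuallyEq ?_⟩
  · refine (hint.mono_set (uIcc_subset_uIcc_left (Icc_subset_uIcc (Ioo_subset_Icc_self hτ)))).congr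
      fun u hu => ?_
    rw [uIoc_of_le hτ.1.le] at hu
    exact indicator_of_mem (s := {u | u ≤ τ}) hu.2 _
  · filter_upwards [Ioo_mem_nhds hτ.1 hτ.2] with σ hσ
    exact (integral_comp_max_sub hzero (Ioo_subset_Icc_self hσ)).symm

end ParametricIntegral

/-- `(1 - exp (-a u)) / a`, the sensitivity of `-log (M a δ b u r)` to the short rate `r`. -/
noncomputable def bondDuration (a u : ℝ) : ℝ := (1 - exp (-(a * u))) / a

/-- The instantaneous forward rate `-∂ᵤ log (M a δ b u r)`; it is also the mean of the Gaussian
density `phiKer a δ b · u r`. -/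
noncomputable def forwardRate (a δ b u r : ℝ) : ℝ :=
  r + a * (b - r) * bondDuration a u - δ ^ 2 / 2 * bondDuration a u ^ 2

/-- The standard deviation of the Gaussian density `phiKer a δ b · u r`. -/
noncomputable def shortRateStd (a δ u : ℝ) : ℝ := √(δ ^ 2 * bondDuration (2 * a) u)

/-- The short rate at which a bond with time `v` to maturity trades at par (see `M_parRate`); the
separating curve depends on `T` and `t` only through `v = T - t`. -/
noncomputable def parRate (a δ b v : ℝ) : ℝ := alphaCurve a δ b v 0

@[fun_prop]
lemma continuous_bondDuration (a : ℝ) : Continuous (bondDuration a) := by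
  unfold bondDuration
  fun_prop

@[simp]
lemma bondDuration_zero (a : ℝ) : bondDuration a 0 = 0 := by
  simp [bondDuration]

lemma bondDuration_add (a u v : ℝ) :
    bondDuration a (u + v) = bondDuration a u + exp (-(a * u)) * bondDuration a v := by
  rw [bondDuration, bondDuration, bondDuration, mul_add, neg_add, exp_add]
  ring

variable {a δ : ℝ}

lemma mul_bondDuration (ha : a ≠ 0) (u : ℝ) : a * bondDuration a u = 1 - exp (-(a * u)) :=
  mul_div_cancel₀ _ ha

lemma hasDerivAt_bondDuration (ha : a ≠ 0) (u : ℝ) :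
    HasDerivAt (bondDuration a) (exp (-(a * u))) u := by
  have hexp : HasDerivAt (fun u => exp (-(a * u))) (exp (-(a * u)) * -(a * 1)) u :=
    ((hasDerivAt_id u).const_mul a).neg.exp
  refine ((hexp.const_sub 1).div_const a).congr_deriv ?_
  field_simp

lemma strictMono_bondDuration (ha : a ≠ 0) : StrictMono (bondDuration a) :=
  strictMono_of_hasDerivAt_pos (hasDerivAt_bondDuration ha) fun _ => exp_pos _

lemma bondDuration_pos (ha : a ≠ 0) {u : ℝ} (hu : 0 < u) : 0 < bondDuration a u := by
  simpa using strictMono_bondDuration ha hu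

lemma bondDuration_ne_zero (ha : a ≠ 0) {u : ℝ} (hu : u ≠ 0) : bondDuration a u ≠ 0 := by
  simpa using (strictMono_bondDuration ha).injective.ne hu

@[fun_prop]
lemma continuous_shortRateStd (a δ : ℝ) : Continuous (shortRateStd a δ) := by
  unfold shortRateStd
  fun_prop

@[simp]
lemma shortRateStd_zero (a δ : ℝ) : shortRateStd a δ 0 = 0 := by
  simp [shortRateStd]

lemma shortRateStd_pos (ha : a ≠ 0) (hδ : δ ≠ 0) {u : ℝ} (hu : 0 < u) :
    0 < shortRateStd a δ u :=
  sqrt_pos.2 (mul_pos (by positivity) (bondDuration_pos (mul_ne_zero two_ne_zero ha) hu))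

lemma tendsto_shortRateStd_zero (ha : a ≠ 0) (hδ : δ ≠ 0) :
    Tendsto (shortRateStd a δ) (𝓝[>] 0) (𝓝[>] 0) := by
  refine tendsto_nhdsWithin_iff.2 ⟨?_, eventually_mem_nhdsWithin.mono fun u hu =>
    shortRateStd_pos ha hδ hu⟩
  simpa using ((continuous_shortRateStd a δ).tendsto 0).mono_left nhdsWithin_le_nhds

lemma sq_shortRateStd (ha : a ≠ 0) (δ : ℝ) {u : ℝ} (hu : 0 < u) :
    shortRateStd a δ u ^ 2 = δ ^ 2 * bondDuration (2 * a) u :=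
  sq_sqrt (mul_nonneg (by positivity) (bondDuration_pos (mul_ne_zero two_ne_zero ha) hu).le)

lemma hasDerivAt_shortRateStd (ha : a ≠ 0) (hδ : δ ≠ 0) {u : ℝ} (hu : 0 < u) :
    HasDerivAt (shortRateStd a δ) (δ ^ 2 / 2 * (exp (-(2 * a * u)) / shortRateStd a δ u)) u := by
  have h2a : 2 * a ≠ 0 := mul_ne_zero two_ne_zero ha
  have hvar : δ ^ 2 * bondDuration (2 * a) u ≠ 0 :=
    mul_ne_zero (pow_ne_zero 2 hδ) (bondDuration_pos h2a hu).ne'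
  refine (((hasDerivAt_bondDuration h2a u).const_mul (δ ^ 2)).sqrt hvar).congr_deriv ?_
  rw [shortRateStd]
  ring

lemma intervalIntegrable_exp_div_shortRateStd (ha : a ≠ 0) (hδ : δ ≠ 0) {τ : ℝ} (hτ : 0 < τ) :
    IntervalIntegrable (fun u => exp (-(2 * a * u)) / shortRateStd a δ u) volume 0 τ := by
  have hpos (u : ℝ) : 0 ≤ δ ^ 2 / 2 * (exp (-(2 * a * u)) / shortRateStd a δ u) := by
    have := sqrt_nonneg (δ ^ 2 * bondDuration (2 * a) u)
    unfold shortRateStd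
    positivity
  have hint := intervalIntegrable_deriv_of_nonneg
    (continuous_shortRateStd a δ).continuousOn
    (fun u hu => hasDerivAt_shortRateStd ha hδ (by
      rw [min_eq_left hτ.le] at hu
      exact hu.1)) fun u _ => hpos u
  refine (hint.const_mul (δ ^ 2 / 2)⁻¹).congr fun u _ => ?_
  rw [inv_mul_cancel_left₀ (by positivity)]

lemma hasDerivAt_forwardRate_rate (ha : a ≠ 0) (δ b u r : ℝ) :
    HasDerivAt (forwardRate a δ b u) (exp (-(a * u))) r := by
  have haff := ((hasDerivAt_id r).add ((((hasDerivAt_id r).const_sub b).const_mul a).mul_const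
    (bondDuration a u))).sub_const (δ ^ 2 / 2 * bondDuration a u ^ 2)
  refine haff.congr_deriv ?_
  linear_combination -mul_bondDuration ha u

@[simp]
lemma forwardRate_zero (a δ b r : ℝ) : forwardRate a δ b 0 r = r := by
  simp [forwardRate]

@[fun_prop]
lemma continuous_forwardRate {X : Type*} [TopologicalSpace X] (a δ b : ℝ) {f g : X → ℝ}
    (hf : Continuous f) (hg : Continuous g) :
    Continuous fun x => forwardRate a δ b (f x) (g x) := by
  unfold forwardRate
  fun_prop

@[fun_prop]
lemma continuous_M {X : Type*} [TopologicalSpace X] (a δ b : ℝ) {f g : X → ℝ}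
    (hf : Continuous f) (hg : Continuous g) :
    Continuous fun x => M a δ b (f x) (g x) := by
  unfold M
  fun_prop

@[simp]
lemma M_tenor_zero (a δ b r : ℝ) : M a δ b 0 r = 1 := by
  simp [M]

lemma M_eq_exp_bondDuration (ha : a ≠ 0) (δ b u r : ℝ) :
    M a δ b u r = exp ((δ ^ 2 / (2 * a ^ 2) - b) * u +
      (b - δ ^ 2 / (2 * a ^ 2) - r) * bondDuration a u -
      δ ^ 2 / (4 * a) * bondDuration a u ^ 2) := by
  rw [M, ← mul_bondDuration ha]
  congr 1
  field_simp
  ring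

lemma hasDerivAt_M_tenor (ha : a ≠ 0) (δ b u r : ℝ) :
    HasDerivAt (fun u => M a δ b u r) (-(forwardRate a δ b u r * M a δ b u r)) u := by
  simp only [M_eq_exp_bondDuration ha]
  have hB := hasDerivAt_bondDuration ha u
  rw [← sub_sub_self 1 (exp (-(a * u))), ← mul_bondDuration ha] at hB
  have hexponent := (((hasDerivAt_id u).const_mul (δ ^ 2 / (2 * a ^ 2) - b)).add
    (hB.const_mul (b - δ ^ 2 / (2 * a ^ 2) - r))).sub ((hB.pow 2).const_mul (δ ^ 2 / (4 * a)))
  refine hexponent.exp.congr_deriv ?_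
  simp only [Pi.add_apply, Pi.sub_apply, id, Pi.pow_apply]
  rw [forwardRate, ← neg_mul, mul_comm]
  congr 1
  field_simp
  ring

lemma hasDerivAt_M_rate (a δ b u r : ℝ) :
    HasDerivAt (M a δ b u) (-(bondDuration a u * M a δ b u r)) r := by
  have hexponent := ((((hasDerivAt_id r).const_sub (b - δ ^ 2 / (2 * a ^ 2))).div_const a).mul_const
    (1 - exp (-(a * u)))).const_add (-(b - δ ^ 2 / (2 * a ^ 2)) * u)
    |>.sub_const (δ ^ 2 / (4 * a ^ 3) * (1 - exp (-(a * u))) ^ 2)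
  refine hexponent.exp.congr_deriv ?_
  simp only [id, M, bondDuration]
  ring

lemma M_parRate (ha : a ≠ 0) (δ b v : ℝ) : M a δ b v (parRate a δ b v) = 1 := by
  rcases eq_or_ne v 0 with rfl | hv
  · exact M_tenor_zero a δ b _
  have hB := bondDuration_ne_zero ha hv
  rw [M_eq_exp_bondDuration ha, exp_eq_one_iff, parRate, alphaCurve, sub_zero,
    ← mul_bondDuration ha]
  field_simp
  ring

lemma differentiableAt_parRate (ha : a ≠ 0) (δ b : ℝ) {v : ℝ} (hv : v ≠ 0) :
    DifferentiableAt ℝ (parRate a δ b) v := by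
  have hden : 1 - exp (-(a * (v - 0))) ≠ 0 := by
    rw [sub_zero, ← mul_bondDuration ha]
    exact mul_ne_zero ha (bondDuration_ne_zero ha hv)
  unfold parRate alphaCurve
  fun_prop (disch := assumption)

lemma phiKer_eq (ha : a ≠ 0) (δ b z r : ℝ) {u : ℝ} (hu : 0 < u) :
    phiKer a δ b z u r =
      ϕ ((forwardRate a δ b u r - z) / shortRateStd a δ u) / shortRateStd a δ u := by
  have hvar : δ ^ 2 / (2 * a) * (1 - exp (-(2 * a * u))) = shortRateStd a δ u ^ 2 := by
    rw [sq_shortRateStd ha δ hu, bondDuration]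
    ring
  have hmean : forwardRate a δ b u r = r * exp (-(a * u)) + b * (1 - exp (-(a * u))) -
      δ ^ 2 / (2 * a ^ 2) * (1 - exp (-(a * u))) ^ 2 := by
    rw [forwardRate, bondDuration]
    field_simp
    ring
  have hstd : 0 ≤ shortRateStd a δ u := sqrt_nonneg _
  rw [phiKer, mul_assoc (2 * π), mul_assoc 2 (δ ^ 2 / (2 * a)), hvar, gaussianPDFReal, hmean,
    Real.sqrt_mul (by positivity), sqrt_sq hstd, NNReal.coe_one, mul_one, mul_one]
  rw [mul_inv, mul_div_right_comm, div_eq_mul_inv _ (shortRateStd a δ u)]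
  congr 2
  ring

lemma M_rate_sub (a δ b v x y : ℝ) :
    M a δ b v (x - y) = M a δ b v x * exp (bondDuration a v * y) := by
  rw [M, M, bondDuration, ← exp_add]
  ring_nf

lemma sq_shortRateStd_eq_mul_sub (ha : a ≠ 0) (δ : ℝ) {u : ℝ} (hu : 0 < u) :
    shortRateStd a δ u ^ 2 = δ ^ 2 / 2 * (bondDuration a u * (2 - a * bondDuration a u)) := by
  rw [sq_shortRateStd ha δ hu, mul_bondDuration ha, bondDuration, bondDuration,
    show -(2 * a * u) = -(a * u) + -(a * u) by ring, exp_add]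
  field_simp
  ring

lemma M_tenor_add (ha : a ≠ 0) (δ b v r : ℝ) {u : ℝ} (hu : 0 < u) :
    M a δ b (u + v) r = M a δ b u r * M a δ b v (forwardRate a δ b u r) *
      exp ((shortRateStd a δ u * bondDuration a v) ^ 2 / 2) := by
  simp only [M_eq_exp_bondDuration ha, ← exp_add]
  rw [mul_pow, sq_shortRateStd_eq_mul_sub ha δ hu, bondDuration_add,
    ← sub_sub_self 1 (exp (-(a * u))), ← mul_bondDuration ha, forwardRate]
  congr 1
  field_simp
  ring

lemma M_mul_M_mul_stdNormalPDF (ha : a ≠ 0) (hδ : δ ≠ 0) (b v z r : ℝ) {u : ℝ} (hu : 0 < u) :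
    M a δ b u r * M a δ b v z * ϕ ((forwardRate a δ b u r - z) / shortRateStd a δ u) =
      M a δ b (u + v) r * ϕ ((forwardRate a δ b u r - z) / shortRateStd a δ u -
        shortRateStd a δ u * bondDuration a v) := by
  set x := (forwardRate a δ b u r - z) / shortRateStd a δ u with hx
  have hz : z = forwardRate a δ b u r - shortRateStd a δ u * x := by
    rw [hx, mul_div_cancel₀ _ (shortRateStd_pos ha hδ hu).ne', sub_sub_cancel]
  rw [hz, M_rate_sub, M_tenor_add ha δ b v r hu, gaussianPDFReal, gaussianPDFReal]
  have hexp : exp (bondDuration a v * (shortRateStd a δ u * x)) *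
      exp (-(x - 0) ^ 2 / (2 * (1 : ℝ≥0))) =
      exp ((shortRateStd a δ u * bondDuration a v) ^ 2 / 2) *
        exp (-(x - shortRateStd a δ u * bondDuration a v - 0) ^ 2 / (2 * (1 : ℝ≥0))) := by
    rw [← exp_add, ← exp_add, NNReal.coe_one]
    ring_nf
  linear_combination (M a δ b u r * M a δ b v (forwardRate a δ b u r) *
    (√(2 * π * (1 : ℝ≥0)))⁻¹) * hexp

/-- The number of standard deviations by which the mean of `phiKer a δ b · u r` exceeds the par
rate `parRate a δ b v`. -/
noncomputable def parScore (a δ b u v r : ℝ) : ℝ :=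
  (forwardRate a δ b u r - parRate a δ b v) / shortRateStd a δ u

/-- The score `parScore` after tilting the Gaussian density by `M a δ b v`. -/
noncomputable def tiltedParScore (a δ b u v r : ℝ) : ℝ :=
  parScore a δ b u v r - shortRateStd a δ u * bondDuration a v

/-- The value at short rate `r` of a put struck at par, expiring after time `u`, on a bond which
then has time `v` to maturity. -/
noncomputable def bondPut (a δ b u v r : ℝ) : ℝ :=
  M a δ b u r * Φ (parScore a δ b u v r) - M a δ b (u + v) r * Φ (tiltedParScore a δ b u v r)

/-- The first derivative of `bondPut` in the short rate. -/
noncomputable def bondPutDelta (a δ b u v r : ℝ) : ℝ :=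
  bondDuration a (u + v) * M a δ b (u + v) r * Φ (tiltedParScore a δ b u v r) -
    bondDuration a u * M a δ b u r * Φ (parScore a δ b u v r)

/-- The second derivative of `bondPut` in the short rate. -/
noncomputable def bondPutGamma (a δ b u v r : ℝ) : ℝ :=
  bondDuration a u ^ 2 * M a δ b u r * Φ (parScore a δ b u v r) -
    bondDuration a (u + v) ^ 2 * M a δ b (u + v) r * Φ (tiltedParScore a δ b u v r) +
    M a δ b (u + v) r * ϕ (tiltedParScore a δ b u v r) * bondDuration a v *
      (exp (-(2 * a * u)) / shortRateStd a δ u)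

/-- The derivative of `bondPut` in the time `v` from expiry to the maturity of the bond. -/
noncomputable def bondPutTenorDeriv (a δ b u v r : ℝ) : ℝ :=
  forwardRate a δ b (u + v) r * M a δ b (u + v) r * Φ (tiltedParScore a δ b u v r) +
    M a δ b (u + v) r * ϕ (tiltedParScore a δ b u v r) * (shortRateStd a δ u * exp (-(a * v)))

lemma bondPut_tenor_zero (a δ b u r : ℝ) : bondPut a δ b u 0 r = 0 := by
  simp [bondPut, tiltedParScore]

-- The put is struck where the bond trades at par, so the two Gaussian terms of every derivative
-- of `bondPut` cancel up to the derivative of `shortRateStd a δ u * bondDuration a v`.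
lemma M_mul_stdNormalPDF_parScore (ha : a ≠ 0) (hδ : δ ≠ 0) (b v r : ℝ) {u : ℝ} (hu : 0 < u) :
    M a δ b u r * ϕ (parScore a δ b u v r) =
      M a δ b (u + v) r * ϕ (tiltedParScore a δ b u v r) := by
  rw [parScore, tiltedParScore, parScore, ← M_mul_M_mul_stdNormalPDF ha hδ b v _ r hu,
    M_parRate ha, mul_one]

lemma integral_Ioi_parRate_eq_bondPut (ha : a ≠ 0) (hδ : δ ≠ 0) (b v r : ℝ) {u : ℝ} (hu : 0 < u) :
    ∫ z in Ioi (parRate a δ b v), M a δ b u r * (1 - M a δ b v z) * phiKer a δ b z u r =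
      bondPut a δ b u v r := by
  have hstd := shortRateStd_pos ha hδ hu
  set m := forwardRate a δ b u r
  set s := shortRateStd a δ u
  have hsplit (z : ℝ) : M a δ b u r * (1 - M a δ b v z) * phiKer a δ b z u r =
      M a δ b u r * (ϕ ((m - z) / s - 0) / s) -
        M a δ b (u + v) r * (ϕ ((m - z) / s - s * bondDuration a v) / s) := by
    rw [phiKer_eq ha δ b z r hu, sub_zero]
    linear_combination -s⁻¹ * M_mul_M_mul_stdNormalPDF ha hδ b v z r hu
  have hint (e : ℝ) : IntegrableOn (fun z => ϕ ((m - z) / s - e) / s) (Ioi (parRate a δ b v)) :=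
    (integrable_stdNormalPDF_affine hstd.ne' m e).integrableOn
  simp only [hsplit]
  rw [MeasureTheory.integral_sub ((hint _).const_mul _) ((hint _).const_mul _),
    MeasureTheory.integral_const_mul, MeasureTheory.integral_const_mul,
    integral_Ioi_stdNormalPDF_affine hstd, integral_Ioi_stdNormalPDF_affine hstd, sub_zero]
  rfl

lemma gammaFun_eq_integral_bondPut (ha : a ≠ 0) (hδ : δ ≠ 0) (b r : ℝ) {T t : ℝ} (ht : t ≤ T) :
    gammaFun a δ b T t r = ∫ u in 0..(T - t), bondPut a δ b u (T - t - u) r := by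
  refine integral_congr_Ioo_of_le (sub_nonneg.2 ht) fun u hu => ?_
  rw [← integral_Ioi_parRate_eq_bondPut ha hδ b _ r hu.1]
  simp only [parRate, alphaCurve, sub_zero, sub_sub, add_comm t u]

section Measurability

variable {X : Type*} [MeasurableSpace X] {f g : X → ℝ}

@[fun_prop]
lemma measurable_bondPut (a δ b r : ℝ) (hf : Measurable f) (hg : Measurable g) :
    Measurable fun x => bondPut a δ b (f x) (g x) r := by
  unfold bondPut tiltedParScore parScore parRate alphaCurve
  fun_prop

@[fun_prop]
lemma measurable_bondPutDelta (a δ b r : ℝ) (hf : Measurable f) (hg : Measurable g) :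
    Measurable fun x => bondPutDelta a δ b (f x) (g x) r := by
  unfold bondPutDelta tiltedParScore parScore parRate alphaCurve
  fun_prop

@[fun_prop]
lemma measurable_bondPutGamma (a δ b r : ℝ) (hf : Measurable f) (hg : Measurable g) :
    Measurable fun x => bondPutGamma a δ b (f x) (g x) r := by
  unfold bondPutGamma tiltedParScore parScore parRate alphaCurve
  fun_prop

@[fun_prop]
lemma measurable_bondPutTenorDeriv (a δ b r : ℝ) (hf : Measurable f) (hg : Measurable g) :
    Measurable fun x => bondPutTenorDeriv a δ b (f x) (g x) r := by
  unfold bondPutTenorDeriv tiltedParScore parScore parRate alphaCurve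
  fun_prop

end Measurability

lemma hasDerivAt_parScore_rate (ha : a ≠ 0) (δ b u v r : ℝ) :
    HasDerivAt (parScore a δ b u v) (exp (-(a * u)) / shortRateStd a δ u) r :=
  ((hasDerivAt_forwardRate_rate ha δ b u r).sub_const _).div_const _

lemma hasDerivAt_tiltedParScore_rate (ha : a ≠ 0) (δ b u v r : ℝ) :
    HasDerivAt (tiltedParScore a δ b u v) (exp (-(a * u)) / shortRateStd a δ u) r :=
  (hasDerivAt_parScore_rate ha δ b u v r).sub_const _

lemma hasDerivAt_bondPut_rate (ha : a ≠ 0) (hδ : δ ≠ 0) (b v r : ℝ) {u : ℝ} (hu : 0 < u) :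
    HasDerivAt (bondPut a δ b u v) (bondPutDelta a δ b u v r) r := by
  refine (hasDerivAt_mul_stdNormalCDF_sub (hasDerivAt_M_rate a δ b u r)
    (hasDerivAt_M_rate a δ b (u + v) r) (hasDerivAt_parScore_rate ha δ b u v r)
    (hasDerivAt_tiltedParScore_rate ha δ b u v r)).congr_deriv ?_
  rw [bondPutDelta, M_mul_stdNormalPDF_parScore ha hδ b v r hu]
  ring

lemma hasDerivAt_bondPutDelta_rate (ha : a ≠ 0) (hδ : δ ≠ 0) (b v r : ℝ) {u : ℝ} (hu : 0 < u) :
    HasDerivAt (bondPutDelta a δ b u v) (bondPutGamma a δ b u v r) r := by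
  refine (hasDerivAt_mul_stdNormalCDF_sub
    ((hasDerivAt_M_rate a δ b (u + v) r).const_mul (bondDuration a (u + v)))
    ((hasDerivAt_M_rate a δ b u r).const_mul (bondDuration a u))
    (hasDerivAt_tiltedParScore_rate ha δ b u v r)
    (hasDerivAt_parScore_rate ha δ b u v r)).congr_deriv ?_
  rw [bondPutGamma, mul_assoc _ (M a δ b u r) (ϕ _), M_mul_stdNormalPDF_parScore ha hδ b v r hu,
    bondDuration_add, show -(2 * a * u) = -(a * u) + -(a * u) by ring, exp_add]
  ring

lemma hasDerivAt_bondPut_comp (ha : a ≠ 0) (hδ : δ ≠ 0) (b r : ℝ) {U W : ℝ → ℝ} {U' W' x : ℝ}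
    (hU : HasDerivAt U U' x) (hW : HasDerivAt W W' x) (hUx : 0 < U x) (hWx : W x ≠ 0) :
    HasDerivAt (fun y => bondPut a δ b (U y) (W y) r)
      (U' * (a * (b - r) * bondPutDelta a δ b (U x) (W x) r +
          δ ^ 2 / 2 * bondPutGamma a δ b (U x) (W x) r - r * bondPut a δ b (U x) (W x) r) +
        W' * bondPutTenorDeriv a δ b (U x) (W x) r) x := by
  have hS := (hasDerivAt_shortRateStd ha hδ hUx).comp x hU
  have hB := (hasDerivAt_bondDuration ha (W x)).comp x hW
  obtain ⟨d', hscore⟩ : ∃ d', HasDerivAt (fun y => parScore a δ b (U y) (W y) r) d' x := by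
    have hpar := (differentiableAt_parRate ha δ b hWx).comp x hW.differentiableAt
    have hfwd : DifferentiableAt ℝ (fun y => forwardRate a δ b (U y) r) x := by
      have hBU := ((hasDerivAt_bondDuration ha (U x)).comp x hU).differentiableAt
      exact ((hBU.const_mul _).const_add _).sub ((hBU.pow 2).const_mul _)
    exact ⟨_, ((hfwd.sub hpar).div hS.differentiableAt
      (shortRateStd_pos ha hδ hUx).ne').hasDerivAt⟩
  refine (hasDerivAt_mul_stdNormalCDF_sub ((hasDerivAt_M_tenor ha δ b (U x) r).comp x hU)
    ((hasDerivAt_M_tenor ha δ b (U x + W x) r).comp x (hU.add hW)) hscore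
    (hscore.sub (hS.mul hB))).congr_deriv ?_
  have hcancel := M_mul_stdNormalPDF_parScore ha hδ b (W x) r hUx
  simp only [Function.comp_apply, Pi.add_apply, Pi.sub_apply, Pi.mul_apply, bondPut,
    bondPutDelta, bondPutGamma, bondPutTenorDeriv, forwardRate, tiltedParScore] at hcancel ⊢
  linear_combination d' * hcancel

lemma hasDerivAt_bondPut_tenor (ha : a ≠ 0) (hδ : δ ≠ 0) (b r : ℝ) {u v : ℝ} (hu : 0 < u)
    (hv : v ≠ 0) :
    HasDerivAt (fun v => bondPut a δ b u v r) (bondPutTenorDeriv a δ b u v r) v := by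
  simpa using hasDerivAt_bondPut_comp ha hδ b r (hasDerivAt_const v u) (hasDerivAt_id v) hu hv

lemma hasDerivAt_bondPut_expiry (ha : a ≠ 0) (hδ : δ ≠ 0) (b r : ℝ) {u τ : ℝ} (hu : 0 < u)
    (huτ : u ≠ τ) :
    HasDerivAt (fun u => bondPut a δ b u (τ - u) r)
      (a * (b - r) * bondPutDelta a δ b u (τ - u) r +
        δ ^ 2 / 2 * bondPutGamma a δ b u (τ - u) r - r * bondPut a δ b u (τ - u) r -
        bondPutTenorDeriv a δ b u (τ - u) r) u := by
  simpa [sub_eq_add_neg] using hasDerivAt_bondPut_comp ha hδ b r (hasDerivAt_id u)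
    ((hasDerivAt_id u).const_sub τ) hu (sub_ne_zero.2 huτ.symm)

lemma abs_bondPut_le (a δ b u v r : ℝ) :
    |bondPut a δ b u v r| ≤ |M a δ b u r| + |M a δ b (u + v) r| :=
  abs_mul_stdNormalCDF_sub_le _ _ _ _

lemma abs_bondPutDelta_le (a δ b u v r : ℝ) :
    |bondPutDelta a δ b u v r| ≤
      |bondDuration a (u + v) * M a δ b (u + v) r| + |bondDuration a u * M a δ b u r| :=
  abs_mul_stdNormalCDF_sub_le _ _ _ _

lemma abs_bondPutGamma_le (a δ b u v r : ℝ) :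
    |bondPutGamma a δ b u v r| ≤
      (|bondDuration a u ^ 2 * M a δ b u r| + |bondDuration a (u + v) ^ 2 * M a δ b (u + v) r| +
        |M a δ b (u + v) r * bondDuration a v|) *
        (1 + exp (-(2 * a * u)) / shortRateStd a δ u) := by
  set w := exp (-(2 * a * u)) / shortRateStd a δ u
  have hw0 : 0 ≤ w := div_nonneg (exp_pos _).le (sqrt_nonneg _)
  have hpdf : |M a δ b (u + v) r * ϕ (tiltedParScore a δ b u v r) * bondDuration a v * w| ≤
      |M a δ b (u + v) r * bondDuration a v| * w := by
    rw [abs_mul, abs_of_nonneg hw0, mul_right_comm]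
    exact mul_le_mul_of_nonneg_right (abs_mul_stdNormalPDF_le _ _) hw0
  refine (abs_add_le _ _).trans ((add_le_add (abs_mul_stdNormalCDF_sub_le _ _ _ _) hpdf).trans ?_)
  rw [← sub_nonneg]
  ring_nf
  positivity

lemma abs_bondPutTenorDeriv_le (a δ b u v r : ℝ) :
    |bondPutTenorDeriv a δ b u v r| ≤ |forwardRate a δ b (u + v) r * M a δ b (u + v) r| +
      |M a δ b (u + v) r * (shortRateStd a δ u * exp (-(a * v)))| := by
  refine (abs_add_le _ _).trans (add_le_add (abs_mul_stdNormalCDF_le _ _) ?_)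
  rw [mul_right_comm]
  exact abs_mul_stdNormalPDF_le _ _

lemma abs_bondPut_le_abs_sub_add (a δ b u v r : ℝ) :
    |bondPut a δ b u v r| ≤ |M a δ b u r - M a δ b (u + v) r| +
      |M a δ b (u + v) r| * |shortRateStd a δ u * bondDuration a v| := by
  have hlip := lipschitzWith_stdNormalCDF.dist_le_mul (parScore a δ b u v r)
    (tiltedParScore a δ b u v r)
  rw [NNReal.coe_one, one_mul, Real.dist_eq, Real.dist_eq, tiltedParScore, sub_sub_cancel] at hlip
  calc |bondPut a δ b u v r|
      = |(M a δ b u r - M a δ b (u + v) r) * Φ (parScore a δ b u v r) + M a δ b (u + v) r *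
          (Φ (parScore a δ b u v r) - Φ (tiltedParScore a δ b u v r))| := by
        rw [bondPut]
        ring_nf
    _ ≤ _ := (abs_add_le _ _).trans (add_le_add (abs_mul_stdNormalCDF_le _ _)
        ((abs_mul _ _).trans_le (mul_le_mul_of_nonneg_left hlip (abs_nonneg _))))

lemma tendsto_bondPut_zero (a δ b r : ℝ) {ι : Type*} {l : Filter ι} {U W : ι → ℝ} {u v : ℝ}
    (hU : Tendsto U l (𝓝 u)) (hW : Tendsto W l (𝓝 v)) (hM : M a δ b u r = M a δ b (u + v) r)
    (hstd : shortRateStd a δ u * bondDuration a v = 0) :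
    Tendsto (fun i => bondPut a δ b (U i) (W i) r) l (𝓝 0) := by
  have hcont : Continuous fun x : ℝ × ℝ => |M a δ b x.1 r - M a δ b (x.1 + x.2) r| +
      |M a δ b (x.1 + x.2) r| * |shortRateStd a δ x.1 * bondDuration a x.2| := by
    fun_prop
  have hlim := (hcont.tendsto (u, v)).comp (hU.prodMk_nhds hW)
  simp only [hM, hstd, sub_self, abs_zero, mul_zero, add_zero] at hlim
  exact squeeze_zero_norm (fun i => abs_bondPut_le_abs_sub_add a δ b (U i) (W i) r) hlim

lemma tendsto_bondPut_expiry_zero (ha : a ≠ 0) (hδ : δ ≠ 0) (b r : ℝ) {τ : ℝ} (hτ : τ ≠ 0) :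
    Tendsto (fun u => bondPut a δ b u (τ - u) r) (𝓝[>] 0)
      (𝓝 ((if parRate a δ b τ < r then 1 else 0) * (1 - M a δ b τ r))) := by
  have hid : Tendsto (fun u : ℝ => u) (𝓝[>] 0) (𝓝 0) := nhdsWithin_le_nhds
  have hsub : Tendsto (fun u => τ - u) (𝓝[>] 0) (𝓝 τ) := by simpa using hid.const_sub τ
  rcases eq_or_ne (parRate a δ b τ) r with rfl | hne
  · simpa [M_parRate ha] using tendsto_bondPut_zero a δ b (parRate a δ b τ) hid hsub
      (by simp [M_parRate ha]) (by simp)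
  have hstd := tendsto_shortRateStd_zero ha hδ
  have hgap : Tendsto (fun u => forwardRate a δ b u r - parRate a δ b (τ - u)) (𝓝[>] 0)
      (𝓝 (r - parRate a δ b τ)) := by
    have hfwd : Continuous fun u => forwardRate a δ b u r := by fun_prop
    simpa using ((hfwd.tendsto 0).comp hid).sub
      ((differentiableAt_parRate ha δ b hτ).continuousAt.tendsto.comp hsub)
  have htilt : Tendsto (fun u => shortRateStd a δ u * bondDuration a (τ - u)) (𝓝[>] 0) (𝓝 0) := by
    simpa using (hstd.mono_right nhdsWithin_le_nhds).mul
      (((continuous_bondDuration a).tendsto τ).comp hsub)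
  have hM : Tendsto (fun u => M a δ b u r) (𝓝[>] 0) (𝓝 1) := by
    have hcont : Continuous fun u => M a δ b u r := by fun_prop
    simpa [Function.comp_def] using (hcont.tendsto 0).comp hid
  have hput {c : ℝ} (hd : Tendsto (fun u => Φ (parScore a δ b u (τ - u) r)) (𝓝[>] 0) (𝓝 c))
      (he : Tendsto (fun u => Φ (tiltedParScore a δ b u (τ - u) r)) (𝓝[>] 0) (𝓝 c)) :
      Tendsto (fun u => bondPut a δ b u (τ - u) r) (𝓝[>] 0) (𝓝 (c * (1 - M a δ b τ r))) := by
    simp only [bondPut, add_sub_cancel]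
    convert (hM.mul hd).sub (he.const_mul _) using 2
    ring
  have hinv := tendsto_inv_nhdsGT_zero.comp hstd
  rcases hne.lt_or_gt with h | h
  · rw [if_pos h]
    have hscore := hgap.pos_mul_atTop (sub_pos.2 h) hinv
    exact hput ((tendsto_cdf_atTop _).comp hscore)
      ((tendsto_cdf_atTop _).comp (hscore.atTop_add htilt.neg))
  · rw [if_neg h.not_gt]
    have hscore := hgap.neg_mul_atTop (sub_neg.2 h) hinv
    exact hput ((tendsto_cdf_atBot _).comp hscore)
      ((tendsto_cdf_atBot _).comp (hscore.atBot_add htilt.neg))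

lemma continuous_bondPut_tenor (ha : a ≠ 0) (hδ : δ ≠ 0) (b r : ℝ) {u : ℝ} (hu : 0 < u) :
    Continuous fun v => bondPut a δ b u v r := by
  refine continuous_iff_continuousAt.2 fun v => ?_
  rcases eq_or_ne v 0 with rfl | hv
  · rw [ContinuousAt, bondPut_tenor_zero]
    exact tendsto_bondPut_zero a δ b r tendsto_const_nhds tendsto_id (by simp) (by simp)
  · exact (hasDerivAt_bondPut_tenor ha hδ b r hu hv).continuousAt

lemma exists_lipschitzOnWith_bondPut_tenor (ha : a ≠ 0) (hδ : δ ≠ 0) (b r τ : ℝ) :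
    ∃ K : ℝ≥0, ∀ u ∈ Ioc 0 τ, LipschitzOnWith K (fun v => bondPut a δ b u v r) (Icc 0 τ) := by
  have hcont : Continuous fun x : ℝ × ℝ =>
      |forwardRate a δ b (x.1 + x.2) r * M a δ b (x.1 + x.2) r| +
        |M a δ b (x.1 + x.2) r * (shortRateStd a δ x.1 * exp (-(a * x.2)))| := by
    fun_prop
  obtain ⟨K, hK⟩ := (isCompact_Icc.prod isCompact_Icc).exists_bound_of_continuousOn
    (s := Icc 0 τ ×ˢ Icc 0 τ) hcont.continuousOn
  refine ⟨K.toNNReal, fun u hu => ?_⟩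
  have hbound : ∀ v ∈ Ioo 0 τ, ‖bondPutTenorDeriv a δ b u v r‖₊ ≤ K.toNNReal := fun v hv =>
    NNReal.coe_le_coe.1 <| ((abs_bondPutTenorDeriv_le a δ b u v r).trans ((le_abs_self _).trans
      (hK (u, v) ⟨Ioc_subset_Icc_self hu, Ioo_subset_Icc_self hv⟩))).trans (le_coe_toNNReal K)
  rw [← closure_Ioo (hu.1.trans_le hu.2).ne]
  exact LipschitzOnWith.closure (continuous_bondPut_tenor ha hδ b r hu.1).continuousOn
    ((convex_Ioo 0 τ).lipschitzOnWith_of_nnnorm_hasDerivWithin_le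
      (fun v hv => (hasDerivAt_bondPut_tenor ha hδ b r hu.1 hv.1.ne').hasDerivWithinAt) hbound)

lemma hasDerivAt_integral_bondPut_maturity (ha : a ≠ 0) (hδ : δ ≠ 0) (b r : ℝ) {τ : ℝ}
    (hτ : 0 < τ) :
    IntervalIntegrable (fun u => bondPutTenorDeriv a δ b u (τ - u) r) volume 0 τ ∧
      HasDerivAt (fun τ => ∫ u in 0..τ, bondPut a δ b u (τ - u) r)
        (∫ u in 0..τ, bondPutTenorDeriv a δ b u (τ - u) r) τ := by
  obtain ⟨K, hK⟩ := exists_lipschitzOnWith_bondPut_tenor ha hδ b r (τ + 1)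
  exact hasDerivAt_integral_comp_sub (f := fun u v => bondPut a δ b u v r)
    (f' := fun u v => bondPutTenorDeriv a δ b u v r) ⟨hτ, lt_add_one τ⟩
    (measurable_bondPut a δ b r measurable_fst measurable_snd).stronglyMeasurable
    (measurable_bondPutTenorDeriv a δ b r measurable_fst measurable_snd).stronglyMeasurable
    (fun u _ => bondPut_tenor_zero a δ b u r) hK
    fun u v hu hv => hasDerivAt_bondPut_tenor ha hδ b r hu hv.ne'

lemma intervalIntegrable_bondPut (a δ b r p q τ : ℝ) :
    IntervalIntegrable (fun u => bondPut a δ b u (τ - u) r) volume p q := by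
  have hcont : Continuous fun u => |M a δ b u r| + |M a δ b (u + (τ - u)) r| := by fun_prop
  exact (hcont.intervalIntegrable p q).mono_fun'
    (Measurable.aestronglyMeasurable (by fun_prop))
    (.of_forall fun u => abs_bondPut_le a δ b u (τ - u) r)

lemma hasDerivAt_integral_bondPut_rate (ha : a ≠ 0) (hδ : δ ≠ 0) (b r : ℝ) {τ : ℝ}
    (hτ : 0 ≤ τ) :
    IntervalIntegrable (fun u => bondPutDelta a δ b u (τ - u) r) volume 0 τ ∧
      HasDerivAt (fun r => ∫ u in 0..τ, bondPut a δ b u (τ - u) r)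
        (∫ u in 0..τ, bondPutDelta a δ b u (τ - u) r) r := by
  refine hasDerivAt_integral_of_abs_le_mul
    (F := fun r u => bondPut a δ b u (τ - u) r) (F' := fun r u => bondPutDelta a δ b u (τ - u) r)
    (G := fun x => |bondDuration a (x.1 + (τ - x.1)) * M a δ b (x.1 + (τ - x.1)) x.2| +
      |bondDuration a x.1 * M a δ b x.1 x.2|) (k := fun _ => 1)
    (fun r => by fun_prop) (by fun_prop) (intervalIntegrable_bondPut a δ b r 0 τ τ)
    (by fun_prop) intervalIntegrable_const (fun _ => zero_le_one) (fun u r => ?_) fun u hu r => ?_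
  · rw [mul_one]
    exact abs_bondPutDelta_le a δ b u (τ - u) r
  · rw [uIoc_of_le hτ] at hu
    exact hasDerivAt_bondPut_rate ha hδ b (τ - u) r hu.1

lemma hasDerivAt_integral_bondPutDelta_rate (ha : a ≠ 0) (hδ : δ ≠ 0) (b r : ℝ) {τ : ℝ}
    (hτ : 0 < τ) :
    IntervalIntegrable (fun u => bondPutGamma a δ b u (τ - u) r) volume 0 τ ∧
      HasDerivAt (fun r => ∫ u in 0..τ, bondPutDelta a δ b u (τ - u) r)
        (∫ u in 0..τ, bondPutGamma a δ b u (τ - u) r) r := by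
  refine hasDerivAt_integral_of_abs_le_mul
    (F := fun r u => bondPutDelta a δ b u (τ - u) r)
    (F' := fun r u => bondPutGamma a δ b u (τ - u) r)
    (G := fun x => |bondDuration a x.1 ^ 2 * M a δ b x.1 x.2| +
      |bondDuration a (x.1 + (τ - x.1)) ^ 2 * M a δ b (x.1 + (τ - x.1)) x.2| +
      |M a δ b (x.1 + (τ - x.1)) x.2 * bondDuration a (τ - x.1)|)
    (k := fun u => 1 + exp (-(2 * a * u)) / shortRateStd a δ u)
    (fun r => by fun_prop) (by fun_prop)
    (hasDerivAt_integral_bondPut_rate ha hδ b r hτ.le).1 (by fun_prop)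
    (intervalIntegrable_const.add (intervalIntegrable_exp_div_shortRateStd ha hδ hτ))
    (fun u => add_nonneg zero_le_one (div_nonneg (exp_pos _).le (sqrt_nonneg _)))
    (fun u r => abs_bondPutGamma_le a δ b u (τ - u) r) fun u hu r => ?_
  rw [uIoc_of_le hτ.le] at hu
  exact hasDerivAt_bondPutDelta_rate ha hδ b (τ - u) r hu.1

lemma integral_bondPut_pde (ha : a ≠ 0) (hδ : δ ≠ 0) (b r : ℝ) {τ : ℝ} (hτ : 0 < τ) :
    -(∫ u in 0..τ, bondPutTenorDeriv a δ b u (τ - u) r) +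
        a * (b - r) * (∫ u in 0..τ, bondPutDelta a δ b u (τ - u) r) +
        δ ^ 2 / 2 * (∫ u in 0..τ, bondPutGamma a δ b u (τ - u) r) -
        r * (∫ u in 0..τ, bondPut a δ b u (τ - u) r) +
        (if parRate a δ b τ < r then 1 else 0) * (1 - M a δ b τ r) = 0 := by
  have hΔ := (hasDerivAt_integral_bondPut_rate ha hδ b r hτ.le).1.const_mul (a * (b - r))
  have hΓ := (hasDerivAt_integral_bondPutDelta_rate ha hδ b r hτ).1.const_mul (δ ^ 2 / 2)
  have hV := (intervalIntegrable_bondPut a δ b r 0 τ τ).const_mul r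
  have hθ := (hasDerivAt_integral_bondPut_maturity ha hδ b r hτ).1
  have hleft : Tendsto (fun u => bondPut a δ b u (τ - u) r) (𝓝[<] τ) (𝓝 0) :=
    have hid : Tendsto (fun u : ℝ => u) (𝓝[<] τ) (𝓝 τ) := nhdsWithin_le_nhds
    tendsto_bondPut_zero a δ b r hid (hid.const_sub τ) (by simp) (by simp)
  have hftc := integral_eq_sub_of_hasDerivAt_of_tendsto hτ
    (fun u hu => hasDerivAt_bondPut_expiry ha hδ b r hu.1 hu.2.ne)
    (((hΔ.add hΓ).sub hV).sub hθ) (tendsto_bondPut_expiry_zero ha hδ b r hτ.ne') hleft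
  rw [integral_sub ((hΔ.add hΓ).sub hV) hθ, integral_sub (hΔ.add hΓ) hV, integral_add hΔ hΓ,
    intervalIntegral.integral_const_mul, intervalIntegral.integral_const_mul,
    intervalIntegral.integral_const_mul] at hftc
  linear_combination hftc

end

theorem gamma_solves_pde_general (a δ b T : ℝ) (ha : a ≠ 0) (hδ : δ ≠ 0) {t : ℝ} (ht : t < T)
    (r : ℝ) :
    deriv (fun t' => gammaFun a δ b T t' r) t
      + a*(b - r) * deriv (fun r' => gammaFun a δ b T t r') r
      + δ^2/2 * deriv (deriv (fun r' => gammaFun a δ b T t r')) r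
      - r * gammaFun a δ b T t r
      + (if alphaCurve a δ b T t < r then (1:ℝ) else 0) * (1 - M a δ b (T - t) r)
      = 0 := by
  have hτ : 0 < T - t := sub_pos.2 ht
  have hγ := gammaFun_eq_integral_bondPut ha hδ b (ht := ht.le)
  have hγ_time : HasDerivAt (fun t => gammaFun a δ b T t r)
      (-∫ u in 0..(T - t), bondPutTenorDeriv a δ b u (T - t - u) r) t := by
    refine ((hasDerivAt_integral_bondPut_maturity ha hδ b r hτ).2.comp_const_sub T t)
      |>.congr_of_eventuallyEq ?_
    filter_upwards [gt_mem_nhds ht] with s hs using gammaFun_eq_integral_bondPut ha hδ b r hs.le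
  have hγ_rate : deriv (fun r => gammaFun a δ b T t r) =
      fun r => ∫ u in 0..(T - t), bondPutDelta a δ b u (T - t - u) r := by
    simp only [hγ]
    exact funext fun r => (hasDerivAt_integral_bondPut_rate ha hδ b r hτ.le).2.deriv
  have hα : alphaCurve a δ b T t = parRate a δ b (T - t) := by
    simp only [parRate, alphaCurve, sub_zero]
  rw [hγ_time.deriv, hγ_rate, (hasDerivAt_integral_bondPutDelta_rate ha hδ b r hτ).2.deriv, hγ, hα]
  exact integral_bondPut_pde ha hδ b r hτ

/-- for every `(t,r) ∈ (0,T) × ℝ`,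
`∂_t γ + a(b−r)·∂_r γ + (δ²/2)·∂_{rr} γ − r·γ + 1_{{r > α(t)}}·(1 − M(T−t,r)) = 0`. -/
theorem gamma_solves_pde (a δ b T : ℝ) (ha : 0 < a) (hδ : 0 < δ) (hT : 0 < T) :
    ∀ t : ℝ, 0 < t → t < T → ∀ r : ℝ,
      deriv (fun t' => gammaFun a δ b T t' r) t
        + a*(b - r) * deriv (fun r' => gammaFun a δ b T t r') r
        + δ^2/2 * deriv (deriv (fun r' => gammaFun a δ b T t r')) r
        - r * gammaFun a δ b T t r
        + (if alphaCurve a δ b T t < r then (1:ℝ) else 0) * (1 - M a δ b (T - t) r)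
        = 0 :=
  fun _ _ ht r => gamma_solves_pde_general a δ b T ha.ne' hδ.ne' ht r
end
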